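/- arXiv:1709.08436 — 9 statements merged into one kernel-verified Lean document; each statement's English description precedes it below -/
import Mathlib

section
/- Every (m,n)-grid USO is acyclic: if an orientation of the (m,n)-grid has the property that every nonempty subgrid has exactly one sink, then the orientation contains no directed cycle. -/
/-!
Suppose a directed cycle exists and take a shortest one, `w 0 → w 1 → ⋯ → w L = w 0`. Asymmetry of
the orientation and unique sinks in `1 × 3`, `3 × 1` and `2 × 2` subgrids rule out `L ≤ 4`. By
minimality the cycle has no chords, so it alternates between moves inside a row and moves inside a
column, `L = 2k` with `3 ≤ k`, and each line it meets contains exactly two (consecutive) cycle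
vertices.

Let `z` be the intersection of a row and a column that the cycle meets, `z` not on the cycle. Then
`z` is adjacent to four cycle vertices, `w i, w (i+1)` on its row and `w j, w (j+1)` on its column.
If some of these edges enter `z` and others leave it, the detour through `z` produces a shorter
cycle (`MinCycle.all_in_or_out`). So all four edges enter `z` or all four leave it.

Two such cells `z, z'` opposite to each other in a `2 × 2` subgrid whose other two corners lie on
the cycle have different types: if both were of the same type, the `2 × 2` subgrid would have two
sinks (`MinCycle.allIn_iff_not`). Write `(a, d)` for the cell in the row of the `a`-th row move
`w (2a) → w (2a+1)` and the column of the `d`-th column move `w (2d+1) → w (2d+2)`. Then `(2, c-1)`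
and `(2, c)` both differ in type from `(c, 1)` when `4 ≤ c ≤ k`, hence `(2, 3)` has the same type
as `(2, k) = (2, 0)`. But `(1, 2)` differs from `(2, 0)`, `(2, 3)` differs from `(3, 1)`, and
`(1, 2)` differs from `(3, 1)`: three pairwise different values among two types.
-/

/-- Two vertices of the `(m,n)`-grid are adjacent iff they are distinct and agree
in the first coordinate (same row) or in the second coordinate (same column). -/
def GridAdj {m n : ℕ} (u v : Fin m × Fin n) : Prop :=
  u ≠ v ∧ (u.1 = v.1 ∨ u.2 = v.2)

/-- An orientation of the `(m,n)`-grid: every edge gets exactly one direction. -/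
structure GridOrientation (m n : ℕ) where
  dir : Fin m × Fin n → Fin m × Fin n → Bool
  dir_adj : ∀ u v, dir u v = true → GridAdj u v
  dir_total : ∀ u v, GridAdj u v → (dir u v = true ↔ dir v u = false)

/-- `v` is a sink of the subgrid `I × J`: it lies in the subgrid and has no
outgoing edge to any vertex of the subgrid. -/
def IsSinkIn {m n : ℕ} (o : GridOrientation m n) (I : Set (Fin m)) (J : Set (Fin n))
    (v : Fin m × Fin n) : Prop :=
  v.1 ∈ I ∧ v.2 ∈ J ∧ ∀ u : Fin m × Fin n, u.1 ∈ I → u.2 ∈ J → o.dir v u = false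

/-- A unique sink orientation: every nonempty subgrid has exactly one sink. -/
def IsUSO {m n : ℕ} (o : GridOrientation m n) : Prop :=
  ∀ (I : Set (Fin m)) (J : Set (Fin n)), I.Nonempty → J.Nonempty →
    ∃! v : Fin m × Fin n, IsSinkIn o I J v

/-- The global sink: the sink of the whole grid. -/
def IsGlobalSink {m n : ℕ} (o : GridOrientation m n) (v : Fin m × Fin n) : Prop :=
  IsSinkIn o Set.univ Set.univ v

/-- `u ⪰ v` : `u = v` or there is a directed path from `u` to `v`. -/
def Reaches {m n : ℕ} (o : GridOrientation m n) (u v : Fin m × Fin n) : Prop :=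
  Relation.ReflTransGen (fun a b => o.dir a b = true) u v

/-- `I_v`: the set of row indices `i'` with `(i', v.2) ⪰ v`. -/
def rowSet {m n : ℕ} (o : GridOrientation m n) (v : Fin m × Fin n) : Set (Fin m) :=
  {i' | Reaches o (i', v.2) v}

/-- `J_v`: the set of column indices `j'` with `(v.1, j') ⪰ v`. -/
def colSet {m n : ℕ} (o : GridOrientation m n) (v : Fin m × Fin n) : Set (Fin n) :=
  {j' | Reaches o (v.1, j') v}

section Grid

variable {m n : ℕ} {o : GridOrientation m n}

lemma dir_asymm {u v : Fin m × Fin n} (h : o.dir u v = true) : o.dir v u = false :=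
  (o.dir_total u v (o.dir_adj u v h)).1 h

lemma dir_irrefl (u : Fin m × Fin n) : o.dir u u = false := by
  by_contra h
  exact (o.dir_adj u u (by simpa using h)).1 rfl

lemma dir_or_dir {u v : Fin m × Fin n} (h : GridAdj u v) :
    o.dir u v = true ∨ o.dir v u = true := by
  have h1 := o.dir_total u v h
  cases h2 : o.dir v u <;> simp_all

/-- A directed triangle lies on a single line, where it leaves three vertices without a sink. -/
lemma no_triangle (h : IsUSO o) {a b c : Fin m × Fin n} (hab : o.dir a b = true)
    (hbc : o.dir b c = true) (hca : o.dir c a = true) : False := by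
  obtain ⟨v, ⟨hv1, hv2, hv⟩, -⟩ := h {a.1, b.1, c.1} {a.2, b.2, c.2} (by simp) (by simp)
  have ha := hv a (by simp) (by simp)
  have hb := hv b (by simp) (by simp)
  have hc := hv c (by simp) (by simp)
  have h1 := o.dir_adj _ _ hab
  have h2 := o.dir_adj _ _ hbc
  have h3 := o.dir_adj _ _ hca
  have key : v = a ∨ v = b ∨ v = c := by
    simp only [GridAdj, Set.mem_insert_iff, Set.mem_singleton_iff, ne_eq, Prod.ext_iff] at *
    grind
  rcases key with rfl | rfl | rfl <;> simp_all

/-- A directed 4-cycle that turns at every vertex spans a `2 × 2` subgrid without a sink. -/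
lemma no_square (h : IsUSO o) {a b c d : Fin m × Fin n} (hab : o.dir a b = true)
    (hbc : o.dir b c = true) (hcd : o.dir c d = true) (hda : o.dir d a = true)
    (h1 : a.1 = b.1) (h2 : b.2 = c.2) (h3 : c.1 = d.1) (h4 : d.2 = a.2) : False := by
  obtain ⟨v, ⟨hv1, hv2, hv⟩, -⟩ := h {a.1, c.1} {a.2, c.2} (by simp) (by simp)
  have ha := hv a (by simp) (by simp)
  have hb := hv b (by simp [h1]) (by simp [h2])
  have hc := hv c (by simp) (by simp)
  have hd := hv d (by simp [h3]) (by simp [h4])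
  have key : v = a ∨ v = b ∨ v = c ∨ v = d := by
    simp only [Set.mem_insert_iff, Set.mem_singleton_iff, Prod.ext_iff] at *
    grind
  rcases key with rfl | rfl | rfl | rfl <;> simp_all

/-- Two opposite corners `z, z'` of a `2 × 2` subgrid are not both sinks of it. -/
lemma no_two_sinks (h : IsUSO o) {p q z z' : Fin m × Fin n}
    (hz1 : z.1 = p.1) (hz2 : z.2 = q.2) (hz1' : z'.1 = q.1) (hz2' : z'.2 = p.2)
    (hpz : o.dir p z = true) (hpz' : o.dir p z' = true)
    (hqz : o.dir q z = true) (hqz' : o.dir q z' = true) : False := by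
  have n1 := (o.dir_adj _ _ hpz).1
  have n2 := (o.dir_adj _ _ hqz).1
  have hne : ¬ GridAdj z z' := by
    simp only [GridAdj, ne_eq, Prod.ext_iff] at *
    grind
  have hzz : z ≠ z' := by
    rintro rfl
    exact n1 (Prod.ext hz1.symm hz2'.symm)
  have f1 : o.dir z z' = false := by
    by_contra hc
    exact hne (o.dir_adj _ _ (by simpa using hc))
  have f2 : o.dir z' z = false := by
    by_contra hc
    have := o.dir_adj _ _ (show o.dir z' z = true by simpa using hc)
    exact hne ⟨hzz, this.2.imp Eq.symm Eq.symm⟩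
  have corner : ∀ u : Fin m × Fin n, u.1 ∈ ({p.1, q.1} : Set (Fin m)) →
      u.2 ∈ ({p.2, q.2} : Set (Fin n)) → u = p ∨ u = q ∨ u = z ∨ u = z' := by
    intro u hu hu'
    simp only [Set.mem_insert_iff, Set.mem_singleton_iff, Prod.ext_iff] at *
    grind
  obtain ⟨v, -, hv⟩ := h {p.1, q.1} {p.2, q.2} (by simp) (by simp)
  apply hzz
  rw [hv z ⟨by simp [hz1], by simp [hz2], ?_⟩, hv z' ⟨by simp [hz1'], by simp [hz2'], ?_⟩]
  · intro u hu hu'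
    rcases corner u hu hu' with rfl | rfl | rfl | rfl
    exacts [dir_asymm hpz', dir_asymm hqz', f2, dir_irrefl _]
  · intro u hu hu'
    rcases corner u hu hu' with rfl | rfl | rfl | rfl
    exacts [dir_asymm hpz, dir_asymm hqz, dir_irrefl _, f1]

/-! ### Directed walks and shortest cycles -/

/-- There is a directed walk with exactly `e` edges from `u` to `v`. -/
def HasWalk (o : GridOrientation m n) : ℕ → Fin m × Fin n → Fin m × Fin n → Prop
  | 0, u, v => u = v
  | e + 1, u, v => ∃ x, o.dir u x = true ∧ HasWalk o e x v

lemma HasWalk.trans {e f : ℕ} {u v x : Fin m × Fin n} (h1 : HasWalk o e u v)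
    (h2 : HasWalk o f v x) : HasWalk o (e + f) u x := by
  induction e generalizing u with
  | zero => cases h1; simpa using h2
  | succ e ih =>
    obtain ⟨y, hy, hw⟩ := h1
    rw [Nat.add_right_comm]
    exact ⟨y, hy, ih hw⟩

lemma HasWalk.single {u v : Fin m × Fin n} (h : o.dir u v = true) : HasWalk o 1 u v :=
  ⟨v, h, rfl⟩

lemma HasWalk.two {u v x : Fin m × Fin n} (h : o.dir u v = true) (h' : o.dir v x = true) :
    HasWalk o 2 u x :=
  ⟨v, h, .single h'⟩

lemma HasWalk.exists_seq {e : ℕ} {u v : Fin m × Fin n} (h : HasWalk o e u v) :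
    ∃ f : ℕ → Fin m × Fin n, f 0 = u ∧ f e = v ∧ ∀ i < e, o.dir (f i) (f (i + 1)) = true := by
  induction e generalizing u with
  | zero => exact ⟨fun _ => u, rfl, h, by simp⟩
  | succ e ih =>
    obtain ⟨y, hy, hw⟩ := h
    obtain ⟨f, h0, he, hf⟩ := ih hw
    refine ⟨fun i => Nat.casesOn i u f, rfl, he, ?_⟩
    rintro (_ | i) hi
    · simpa [h0] using hy
    · exact hf i (by omega)

/-- `w` runs periodically through a directed closed walk of length `L`, and no closed walk of
positive length is shorter. -/
structure MinCycle (o : GridOrientation m n) (L : ℕ) (w : ℕ → Fin m × Fin n) : Prop where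
  pos : 0 < L
  step : ∀ i, o.dir (w i) (w (i + 1)) = true
  per : ∀ i, w (i + L) = w i
  min : ∀ e u, 0 < e → HasWalk o e u u → L ≤ e

lemma exists_minCycle {v : Fin m × Fin n}
    (hv : Relation.TransGen (fun a b => o.dir a b = true) v v) : ∃ L w, MinCycle o L w := by
  classical
  have hex : ∃ e, 0 < e ∧ ∃ u, HasWalk o e u u := by
    have : ∀ x, Relation.TransGen (fun a b => o.dir a b = true) v x →
        ∃ e, 0 < e ∧ HasWalk o e v x := by
      intro x hx
      induction hx with
      | single h => exact ⟨1, one_pos, .single h⟩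
      | tail _ h ih =>
        obtain ⟨e, he, hw⟩ := ih
        exact ⟨e + 1, by omega, hw.trans (.single h)⟩
    obtain ⟨e, he, hw⟩ := this v hv
    exact ⟨e, he, v, hw⟩
  obtain ⟨hL, u, hu⟩ := Nat.find_spec hex
  obtain ⟨f, h0, he, hf⟩ := hu.exists_seq
  set L := Nat.find hex with hLdef
  refine ⟨L, fun i => f (i % L), hL, fun i => ?_, fun i => by simp, fun e u he hw =>
    Nat.find_min' hex ⟨he, u, hw⟩⟩
  have hlt := Nat.mod_lt i hL
  have := hf (i % L) hlt
  rcases Nat.lt_or_ge (i % L + 1) L with h | h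
  · have h1 : (i + 1) % L = i % L + 1 := by
      rw [← Nat.mod_add_mod, Nat.mod_eq_of_lt h]
    simpa [h1] using this
  · have h2 : i % L + 1 = L := by omega
    have h1 : (i + 1) % L = 0 := by
      rw [← Nat.mod_add_mod, h2, Nat.mod_self]
    simpa [h1, h0, h2, he] using this

namespace MinCycle

variable {L : ℕ} {w : ℕ → Fin m × Fin n}

lemma shift (M : MinCycle o L w) (t : ℕ) : MinCycle o L (fun i => w (i + t)) where
  pos := M.pos
  step i := by simpa [Nat.add_right_comm] using M.step (i + t)
  per i := by simpa [Nat.add_right_comm] using M.per (i + t)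
  min := M.min

lemma walk (M : MinCycle o L w) (i e : ℕ) : HasWalk o e (w i) (w (i + e)) := by
  induction e with
  | zero => rfl
  | succ e ih => exact ih.trans (.single (M.step _))

/-- No walk is a shortcut of the cycle. -/
lemma short (M : MinCycle o L w) {i j e : ℕ} (hij : j ≤ i + L) (he : 0 < e + (i + L - j))
    (hw : HasWalk o e (w i) (w j)) : j ≤ i + e := by
  have h1 := M.walk j (i + L - j)
  rw [Nat.add_sub_cancel' hij, M.per] at h1
  have := M.min _ _ he (hw.trans h1)
  omega

lemma not_adj (M : MinCycle o L w) {i j : ℕ} (h1 : i + 2 ≤ j) (h2 : j + 2 ≤ i + L) :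
    ¬ GridAdj (w i) (w j) := by
  intro h
  rcases dir_or_dir (o := o) h with h | h
  · have := M.short (by omega) (by omega) (.single h)
    omega
  · rw [← M.per i] at h
    have := M.short (by omega) (by omega) (.single h)
    omega

lemma noline (M : MinCycle o L w) {i j : ℕ} (h1 : i + 2 ≤ j) (h2 : j + 2 ≤ i + L) :
    (w i).1 ≠ (w j).1 ∧ (w i).2 ≠ (w j).2 := by
  have hne : w i ≠ w j := by
    intro h
    have := M.short (e := 0) (i := i) (j := j) (by omega) (by omega) h
    omega
  have := M.not_adj h1 h2
  simp only [GridAdj, not_and, not_or] at this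
  exact this hne

lemma row_or_col (M : MinCycle o L w) (i : ℕ) :
    (w i).1 = (w (i + 1)).1 ∨ (w i).2 = (w (i + 1)).2 :=
  (o.dir_adj _ _ (M.step i)).2

lemma not_row_and_col (M : MinCycle o L w) {i : ℕ} (h1 : (w i).1 = (w (i + 1)).1)
    (h2 : (w i).2 = (w (i + 1)).2) : False :=
  (o.dir_adj _ _ (M.step i)).1 (Prod.ext h1 h2)

lemma four_le (M : MinCycle o L w) (h : IsUSO o) : 4 ≤ L := by
  by_contra hL
  have hp := M.pos
  have s0 := M.step 0
  have s1 := M.step 1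
  have s2 := M.step 2
  have p := M.per 0
  obtain rfl | rfl | rfl : L = 1 ∨ L = 2 ∨ L = 3 := by omega
  · simp only [zero_add] at *
    rw [p, dir_irrefl] at s0
    simp at s0
  · simp only [zero_add, Nat.reduceAdd] at *
    rw [p, dir_asymm s0] at s1
    simp at s1
  · simp only [zero_add, Nat.reduceAdd] at *
    rw [p] at s2
    exact no_triangle h s0 s1 s2

lemma col_succ (M : MinCycle o L w) (hL : 4 ≤ L) {i : ℕ} (hi : (w i).1 = (w (i + 1)).1) :
    (w (i + 1)).2 = (w (i + 2)).2 := by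
  refine (M.row_or_col (i + 1)).resolve_left fun hr => ?_
  exact (M.noline (i := i) (j := i + 2) (by omega) (by omega)).1 (hi.trans hr)

lemma row_succ (M : MinCycle o L w) (hL : 4 ≤ L) {i : ℕ} (hi : (w i).2 = (w (i + 1)).2) :
    (w (i + 1)).1 = (w (i + 2)).1 := by
  refine (M.row_or_col (i + 1)).resolve_right fun hr => ?_
  exact (M.noline (i := i) (j := i + 2) (by omega) (by omega)).2 (hi.trans hr)

/-- A vertex `z` joined to two edges of a shortest cycle that are far apart receives all four
connecting edges or emits all four; otherwise a detour through `z` is a shortcut. -/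
lemma all_in_or_out (M : MinCycle o L w) (hL : 4 ≤ L) {i j : ℕ} (hij : i + 3 ≤ j)
    (hji : j + 3 ≤ i + L) {z : Fin m × Fin n}
    (a1 : GridAdj z (w i)) (a2 : GridAdj z (w (i + 1)))
    (a3 : GridAdj z (w j)) (a4 : GridAdj z (w (j + 1))) :
    (o.dir (w i) z = true ∧ o.dir (w (i + 1)) z = true ∧
      o.dir (w j) z = true ∧ o.dir (w (j + 1)) z = true) ∨
    (o.dir z (w i) = true ∧ o.dir z (w (i + 1)) = true ∧
      o.dir z (w j) = true ∧ o.dir z (w (j + 1)) = true) := by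
  have S : ∀ p q, p + 3 ≤ q → q ≤ p + L → o.dir (w p) z = true → o.dir z (w q) = true → False := by
    intro p q h1 h2 h3 h4
    have := M.short h2 (by omega) (.two h3 h4)
    omega
  -- an edge of the cycle followed by a detour back through `z` would be a triangle
  have Tr : ∀ p, o.dir (w (p + 1)) z = true → o.dir z (w p) = true → False := by
    intro p h1 h2
    have := M.min 3 (w p) (by omega) ⟨_, M.step p, .two h1 h2⟩
    omega
  have e1 := dir_or_dir (o := o) a1
  have e2 := dir_or_dir (o := o) a2
  have e3 := dir_or_dir (o := o) a3
  have e4 := dir_or_dir (o := o) a4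
  have q1 := S i j (by omega) (by omega)
  have q2 := S i (j + 1) (by omega) (by omega)
  have q3 := S (i + 1) (j + 1) (by omega) (by omega)
  have q4 := S j (i + L) (by omega) (by omega)
  have q5 := S j (i + 1 + L) (by omega) (by omega)
  have q6 := S (j + 1) (i + 1 + L) (by omega) (by omega)
  have t1 := Tr i
  have t2 := Tr j
  rw [M.per] at q4 q5 q6
  clear S Tr
  grind only

/-! ### Cells off the cycle -/

/-- The cell in the row of `w i` and the column of `w j` receives edges from
`w i, w (i + 1), w j, w (j + 1)`. -/
def AllIn (o : GridOrientation m n) (w : ℕ → Fin m × Fin n) (i j : ℕ) : Prop :=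
  o.dir (w i) ((w i).1, (w j).2) = true ∧ o.dir (w (i + 1)) ((w i).1, (w j).2) = true ∧
    o.dir (w j) ((w i).1, (w j).2) = true ∧ o.dir (w (j + 1)) ((w i).1, (w j).2) = true

/-- The cell in the row of `w i` and the column of `w j` emits edges to
`w i, w (i + 1), w j, w (j + 1)`. -/
def AllOut (o : GridOrientation m n) (w : ℕ → Fin m × Fin n) (i j : ℕ) : Prop :=
  o.dir ((w i).1, (w j).2) (w i) = true ∧ o.dir ((w i).1, (w j).2) (w (i + 1)) = true ∧
    o.dir ((w i).1, (w j).2) (w j) = true ∧ o.dir ((w i).1, (w j).2) (w (j + 1)) = true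

/-- The cyclic distance of `i` and `j` modulo `L` is at least 3, and `i`, `j` differ by less
than `L`. -/
def Far (L i j : ℕ) : Prop :=
  (i + 3 ≤ j ∧ j + 3 ≤ i + L) ∨ (j + 3 ≤ i ∧ i + 3 ≤ j + L)

lemma allIn_or_allOut (M : MinCycle o L w) (hL : 4 ≤ L) {i j : ℕ} (hf : Far L i j)
    (hi : (w i).1 = (w (i + 1)).1) (hj : (w j).2 = (w (j + 1)).2) :
    AllIn o w i j ∨ AllOut o w i j := by
  have nl : ∀ p q, (p = i ∨ p = i + 1) → (q = j ∨ q = j + 1) →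
      (w p).1 ≠ (w q).1 ∧ (w p).2 ≠ (w q).2 := by
    intro p q hp hq
    rcases hf with hf | hf
    · exact M.noline (by omega) (by omega)
    · have := M.noline (i := q) (j := p) (by omega) (by omega)
      exact ⟨this.1.symm, this.2.symm⟩
  have n1 := nl i j (by simp) (by simp)
  have n2 := nl (i + 1) j (by simp) (by simp)
  have n3 := nl i (j + 1) (by simp) (by simp)
  have a1 : GridAdj ((w i).1, (w j).2) (w i) :=
    ⟨fun h => n1.2 (congrArg Prod.snd h).symm, Or.inl rfl⟩
  have a2 : GridAdj ((w i).1, (w j).2) (w (i + 1)) :=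
    ⟨fun h => n2.2 (congrArg Prod.snd h).symm, Or.inl hi⟩
  have a3 : GridAdj ((w i).1, (w j).2) (w j) :=
    ⟨fun h => n1.1 (Prod.ext_iff.1 h).1, Or.inr rfl⟩
  have a4 : GridAdj ((w i).1, (w j).2) (w (j + 1)) :=
    ⟨fun h => n3.1 (Prod.ext_iff.1 h).1, Or.inr hj⟩
  unfold AllIn AllOut
  rcases hf with hf | hf
  · exact M.all_in_or_out hL hf.1 hf.2 a1 a2 a3 a4
  · have := M.all_in_or_out hL hf.1 hf.2 a3 a4 a1 a2
    tauto

/-- Opposite off-cycle corners of a `2 × 2` subgrid whose remaining corners `w s` and `w t` lie on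
the cycle have different types. -/
lemma allIn_iff_not (M : MinCycle o L w) (h : IsUSO o) (hL : 4 ≤ L) {i j i' j' : ℕ} (s t : ℕ)
    (hf : Far L i j) (hf' : Far L i' j')
    (hi : (w i).1 = (w (i + 1)).1) (hj : (w j).2 = (w (j + 1)).2)
    (hi' : (w i').1 = (w (i' + 1)).1) (hj' : (w j').2 = (w (j' + 1)).2)
    (s1 : s = i ∨ s = i + 1) (s2 : s = j' ∨ s = j' + 1)
    (t1 : t = j ∨ t = j + 1) (t2 : t = i' ∨ t = i' + 1) :
    AllIn o w i j ↔ ¬ AllIn o w i' j' := by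
  have c1 : (w s).1 = (w i).1 := by rcases s1 with rfl | rfl <;> simp [hi]
  have c2 : (w s).2 = (w j').2 := by rcases s2 with rfl | rfl <;> simp [hj']
  have c3 : (w t).2 = (w j).2 := by rcases t1 with rfl | rfl <;> simp [hj]
  have c4 : (w t).1 = (w i').1 := by rcases t2 with rfl | rfl <;> simp [hi']
  constructor
  · rintro ⟨x1, x2, x3, x4⟩ ⟨y1, y2, y3, y4⟩
    refine no_two_sinks h (p := w s) (q := w t) (z := ((w i).1, (w j).2))
      (z' := ((w i').1, (w j').2)) c1.symm c3.symm c4.symm c2.symm ?_ ?_ ?_ ?_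
    · rcases s1 with rfl | rfl <;> assumption
    · rcases s2 with rfl | rfl <;> assumption
    · rcases t1 with rfl | rfl <;> assumption
    · rcases t2 with rfl | rfl <;> assumption
  · intro hn
    by_contra hn'
    obtain ⟨x1, x2, x3, x4⟩ := (M.allIn_or_allOut hL hf hi hj).resolve_left hn'
    obtain ⟨y1, y2, y3, y4⟩ := (M.allIn_or_allOut hL hf' hi' hj').resolve_left hn
    refine no_two_sinks h (p := ((w i).1, (w j).2)) (q := ((w i').1, (w j').2)) (z := w s)
      (z' := w t) c1 c2 c4 c3 ?_ ?_ ?_ ?_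
    · rcases s1 with rfl | rfl <;> assumption
    · rcases t1 with rfl | rfl <;> assumption
    · rcases s2 with rfl | rfl <;> assumption
    · rcases t2 with rfl | rfl <;> assumption

lemma false_of_row (M : MinCycle o L w) (h : IsUSO o) (h0 : (w 0).1 = (w (0 + 1)).1) : False := by
  have hL := M.four_le h
  have R : ∀ a, (w (2 * a)).1 = (w (2 * a + 1)).1 := by
    intro a
    induction a with
    | zero => exact h0
    | succ a ih => exact M.row_succ hL (M.col_succ hL ih)
  have C : ∀ a, (w (2 * a + 1)).2 = (w (2 * a + 1 + 1)).2 := fun a => M.col_succ hL (R a)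
  obtain ⟨k, rfl | rfl⟩ : ∃ k, L = 2 * k ∨ L = 2 * k + 1 := ⟨L / 2, by omega⟩
  swap
  · have c := C k
    have p0 := M.per 0
    have p1 := M.per 1
    rw [show 0 + (2 * k + 1) = 2 * k + 1 by omega] at p0
    rw [show 1 + (2 * k + 1) = 2 * k + 1 + 1 by omega] at p1
    rw [p0, p1] at c
    exact M.not_row_and_col h0 c
  have hk : 3 ≤ k := by
    by_contra hk
    obtain rfl : k = 2 := by omega
    have p := M.per 0
    have s3 := M.step 3
    have c1 := C 1
    simp only [zero_add, Nat.reduceMul, Nat.reduceAdd] at p s3 c1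
    rw [p] at s3 c1
    exact no_square h (M.step 0) (M.step 1) (M.step 2) s3 (R 0) (C 0) (R 1) c1
  have key : ∀ {a d a' d'} (s t : ℕ), Far (2 * k) (2 * a) (2 * d + 1) →
      Far (2 * k) (2 * a') (2 * d' + 1) →
      (s = 2 * a ∨ s = 2 * a + 1) → (s = 2 * d' + 1 ∨ s = 2 * d' + 1 + 1) →
      (t = 2 * d + 1 ∨ t = 2 * d + 1 + 1) → (t = 2 * a' ∨ t = 2 * a' + 1) →
      (AllIn o w (2 * a) (2 * d + 1) ↔ ¬ AllIn o w (2 * a') (2 * d' + 1)) :=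
    fun s t f f' => M.allIn_iff_not h hL s t f f' (R _) (C _) (R _) (C _)
  have k1 := key (a := 1) (d := 2) (a' := 2) (d' := 0) 2 5 (by unfold Far; omega)
    (by unfold Far; omega) (by omega) (by omega) (by omega) (by omega)
  have k2 := key (a := 2) (d := 3) (a' := 3) (d' := 1) 4 7 (by unfold Far; omega)
    (by unfold Far; omega) (by omega) (by omega) (by omega) (by omega)
  have k3 := key (a := 1) (d := 2) (a' := 3) (d' := 1) 3 6 (by unfold Far; omega)
    (by unfold Far; omega) (by omega) (by omega) (by omega) (by omega)
  have const : ∀ c, 3 ≤ c → c ≤ k →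
      (AllIn o w (2 * 2) (2 * c + 1) ↔ AllIn o w (2 * 2) (2 * 3 + 1)) := by
    intro c hc
    induction c, hc using Nat.le_induction with
    | base => simp
    | succ c hc ih =>
      intro hck
      have l1 := key (a := 2) (d := c) (a' := c + 1) (d' := 1) 4 (2 * c + 2)
        (by unfold Far; omega) (by unfold Far; omega) (by omega) (by omega) (by omega) (by omega)
      have l2 := key (a := 2) (d := c + 1) (a' := c + 1) (d' := 1) 4 (2 * c + 3)
        (by unfold Far; omega) (by unfold Far; omega) (by omega) (by omega) (by omega) (by omega)
      rw [← ih (by omega), l1, l2]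
  have hc := const k hk le_rfl
  -- column move number `k` is column move number `0`
  have wrap : AllIn o w (2 * 2) (2 * k + 1) ↔ AllIn o w (2 * 2) (2 * 0 + 1) := by
    have p1 := M.per 1
    have p2 := M.per 2
    rw [show 1 + 2 * k = 2 * k + 1 by omega] at p1
    rw [show 2 + 2 * k = 2 * k + 1 + 1 by omega] at p2
    simp only [AllIn, p1, p2, mul_zero, zero_add, Nat.reduceAdd]
  tauto

end MinCycle

end Grid

/-- Every `(m,n)`-grid USO is acyclic: it contains no directed cycle. -/
theorem grid_uso_acyclic {m n : ℕ} (o : GridOrientation m n) (h : IsUSO o) :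
    ∀ v : Fin m × Fin n, ¬ Relation.TransGen (fun a b => o.dir a b = true) v v := by
  intro v hv
  obtain ⟨L, w, M⟩ := exists_minCycle hv
  rcases M.row_or_col 0 with h0 | h0
  · exact M.false_of_row h h0
  · exact (M.shift 1).false_of_row h (M.row_succ (M.four_le h) h0)
end

section
/- In an (m,n)-grid USO, every vertex has a directed path to the global sink; equivalently, writing u ⪰ v if u = v or there is a directed path from u to v, the global sink is the unique minimum of the relation ⪰: every vertex u satisfies u ⪰ s, where s is the global sink. -/
/-- In an `(m,n)`-grid USO, every vertex `u` satisfies `u ⪰ s`,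
where `s` is the global sink. -/
theorem grid_uso_reaches_global_sink {m n : ℕ} (o : GridOrientation m n) (h : IsUSO o)
    (s : Fin m × Fin n) (hs : IsGlobalSink o s) :
    ∀ u : Fin m × Fin n, Reaches o u s := by
  intro u
  obtain ⟨t, ⟨⟨c, hc, hct⟩, htJ, ht⟩, -⟩ :=
    h {i | ∃ c, Reaches o u c ∧ c.1 = i} {j | ∃ c, Reaches o u c ∧ c.2 = j}
      ⟨u.1, u, .refl, rfl⟩ ⟨u.2, u, .refl, rfl⟩
  obtain ⟨x, ⟨hx1, -, hx⟩, -⟩ := h {t.1} Set.univ ⟨t.1, rfl⟩ ⟨t.2, trivial⟩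
  have hx1 : x.1 = t.1 := hx1
  have points : ∀ y : Fin m × Fin n, y.1 = t.1 → y ≠ x → o.dir y x = true := fun y hy hne =>
    (o.dir_total y x ⟨hne, Or.inl (hy.trans hx1.symm)⟩).2 (hx y hy trivial)
  have hxC : Reaches o u x := by
    by_cases hcx : c = x
    · exact hcx ▸ hc
    · exact hc.tail (points c hct hcx)
  have htx : t = x := by
    by_contra hne
    have h1 := points t rfl hne
    rw [ht x ⟨x, hxC, rfl⟩ ⟨x, hxC, rfl⟩] at h1
    exact Bool.false_ne_true h1
  have htC : Reaches o u t := htx ▸ hxC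
  have htsink : IsGlobalSink o t := by
    refine ⟨trivial, trivial, fun v _ _ => ?_⟩
    by_contra hv
    have hvC : Reaches o u v := htC.tail (Bool.eq_true_of_not_eq_false hv)
    exact hv (ht v ⟨v, hvC, rfl⟩ ⟨v, hvC, rfl⟩)
  have hts : t = s :=
    (h Set.univ Set.univ ⟨t.1, trivial⟩ ⟨t.2, trivial⟩).unique htsink hs
  exact hts ▸ htC
end

section
/- Let G be an (n,n)-grid USO and let v_1, …, v_n be vertices lying in pairwise distinct rows and pairwise distinct columns, with v_k in row r_k and column c_k. Suppose there is no directed path from v_n to v_k in G for every k < n. Then for every k < n, either r_k ∈ I_{v_n} or c_k ∈ J_{v_n}; in particular the rows [n] are covered by I_{v_n} together with the rows r_k whose column index c_k lies in J_{v_n}. -/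
theorem dir_of_adj_of_ne {m n : ℕ} (o : GridOrientation m n) {u w : Fin m × Fin n}
    (hadj : GridAdj u w) (hn : ¬ o.dir u w = true) : o.dir w u = true :=
  (o.dir_total w u ⟨hadj.1.symm, hadj.2.imp Eq.symm Eq.symm⟩).2 (by simpa using hn)

/-- A corner of a `2 × 2` subgrid is its sink as soon as both edges at that corner are incoming. -/
theorem isSinkIn_pair {m n : ℕ} (o : GridOrientation m n) {i i' : Fin m} {j j' : Fin n}
    (hi : i ≠ i') (hj : j ≠ j')
    (h1 : o.dir (i', j) (i, j) = true) (h2 : o.dir (i, j') (i, j) = true) :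
    IsSinkIn o {i, i'} {j, j'} (i, j) := by
  refine ⟨by simp, by simp, ?_⟩
  rintro ⟨x, y⟩ hx hy
  simp only [Set.mem_insert_iff, Set.mem_singleton_iff] at hx hy
  rcases hx with rfl | rfl <;> rcases hy with rfl | rfl
  · by_contra hc
    exact (o.dir_adj _ _ (by simpa using hc)).1 rfl
  · exact (o.dir_total _ _ (o.dir_adj _ _ h2)).1 h2
  · exact (o.dir_total _ _ (o.dir_adj _ _ h1)).1 h1
  · by_contra hc
    rcases (o.dir_adj _ _ (by simpa using hc)).2 with e | e
    · exact hi e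
    · exact hj e

/-- Otherwise the two corners `(b.1, a.2)` and `(a.1, b.2)` are both sinks of the subgrid spanned by
`a` and `b`. -/
theorem mem_rowSet_or_mem_colSet {m n : ℕ} (o : GridOrientation m n) (h : IsUSO o)
    (a b : Fin m × Fin n) (h1 : a.1 ≠ b.1) (h2 : a.2 ≠ b.2)
    (hp : ¬ Relation.TransGen (fun a b => o.dir a b = true) a b) :
    b.1 ∈ rowSet o a ∨ b.2 ∈ colSet o a := by
  obtain ⟨r, c⟩ := a
  obtain ⟨r', c'⟩ := b
  dsimp only at h1 h2
  by_contra hcon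
  push Not at hcon
  obtain ⟨hr, hc⟩ := hcon
  have e1 : o.dir (r, c) (r', c) = true :=
    dir_of_adj_of_ne o ⟨by simp [h1.symm], Or.inr rfl⟩ fun e => hr (.single e)
  have e2 : o.dir (r, c) (r, c') = true :=
    dir_of_adj_of_ne o ⟨by simp [h2.symm], Or.inl rfl⟩ fun e => hc (.single e)
  have e3 : o.dir (r', c') (r', c) = true :=
    dir_of_adj_of_ne o ⟨by simp [h2], Or.inl rfl⟩ fun e => hp (.tail (.single e1) e)
  have e4 : o.dir (r', c') (r, c') = true :=
    dir_of_adj_of_ne o ⟨by simp [h1], Or.inr rfl⟩ fun e => hp (.tail (.single e2) e)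
  have s1 := isSinkIn_pair o h1.symm h2 e1 e3
  have s2 := isSinkIn_pair o h1 h2.symm e4 e2
  rw [Set.pair_comm r' r] at s1
  rw [Set.pair_comm c' c] at s2
  have := (h {r, r'} {c, c'} ⟨r, by simp⟩ ⟨c, by simp⟩).unique s1 s2
  exact h1 (Prod.ext_iff.1 this).1.symm

/-- let `v 0, …, v (n-1)` lie in pairwise distinct rows and columns of
an `(n,n)`-grid USO, with `v k` in row `r k = (v k).1` and column `c k = (v k).2`,
and suppose there is no directed path from the last vertex `v last` to `v k` for every
`k < last`. Then every such `k` has `r k ∈ I_{v last}` or `c k ∈ J_{v last}`; in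
particular each row index is in `I_{v last}` or equals some `r k` with `c k ∈ J_{v last}`. -/
theorem last_vertex_incoming_rows_or_columns {n : ℕ} (hn : 0 < n)
    (o : GridOrientation n n) (h : IsUSO o) (v : Fin n → Fin n × Fin n)
    (hrow : Function.Injective fun k => (v k).1)
    (hcol : Function.Injective fun k => (v k).2)
    (last : Fin n) (hlast : (last : ℕ) = n - 1)
    (hpath : ∀ k : Fin n, (k : ℕ) < n - 1 →
      ¬ Relation.TransGen (fun a b => o.dir a b = true) (v last) (v k)) :
    (∀ k : Fin n, (k : ℕ) < n - 1 →
        (v k).1 ∈ rowSet o (v last) ∨ (v k).2 ∈ colSet o (v last)) ∧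
      ∀ r : Fin n, r ∈ rowSet o (v last) ∨
        ∃ k : Fin n, (k : ℕ) < n - 1 ∧ (v k).1 = r ∧ (v k).2 ∈ colSet o (v last) := by
  have main : ∀ k : Fin n, (k : ℕ) < n - 1 →
      (v k).1 ∈ rowSet o (v last) ∨ (v k).2 ∈ colSet o (v last) := by
    intro k hk
    have hne : last ≠ k := by
      rintro rfl
      omega
    exact mem_rowSet_or_mem_colSet o h _ _ (hrow.ne hne) (hcol.ne hne) (hpath k hk)
  refine ⟨main, fun r => ?_⟩
  obtain ⟨k, rfl⟩ := Finite.surjective_of_injective hrow r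
  by_cases hk : (k : ℕ) < n - 1
  · exact (main k hk).imp id fun hc => ⟨k, hk, rfl, hc⟩
  · obtain rfl : k = last := Fin.ext (by omega)
    exact Or.inl Relation.ReflTransGen.refl
end

section
/- (Main combinatorial lemma) Let G be an (n,n)-grid USO and let v_1, …, v_n be n vertices lying in pairwise distinct rows and pairwise distinct columns. Then at least one entire row and at least one entire column are eliminated: there exist a row index r and a column index c such that every vertex of row r and every vertex of column c belongs to the union over k of the subgrids I_{v_k} × J_{v_k}. -/
/-- A self-map of a nonempty finite type permutes some nonempty subset: a minimal nonempty
invariant set equals its own image. -/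
lemma exists_invariant_injOn {K : Type*} [Fintype K] [DecidableEq K] [Nonempty K] (J : K → K) :
    ∃ S : Finset K, S.Nonempty ∧ (∀ p ∈ S, J p ∈ S) ∧ Set.InjOn J S := by
  obtain ⟨S, hS⟩ := (Finset.univ.filter fun S : Finset K =>
    S.Nonempty ∧ ∀ p ∈ S, J p ∈ S).exists_minimal ⟨Finset.univ, by simp⟩
  obtain ⟨hS, hmin⟩ := hS
  simp only [Finset.mem_filter, Finset.mem_univ, true_and] at hS hmin
  refine ⟨S, hS.1, hS.2, ?_⟩
  have hsub : S.image J ⊆ S := by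
    intro x hx
    obtain ⟨p, hp, rfl⟩ := Finset.mem_image.1 hx
    exact hS.2 p hp
  have hge : S ⊆ S.image J :=
    hmin ⟨hS.1.image J, fun p hp => Finset.mem_image_of_mem J (hsub hp)⟩ hsub
  exact Finset.card_image_iff.1 (congrArg Finset.card (hsub.antisymm hge))

/-- If every nonempty set of indices contains a `k` to which each member is `P`- or `Q`-related,
then some `p` is joined to every `q` through a common `k`. -/
lemma exists_forall_covered {K : Type*} [Fintype K] [Nonempty K] (P Q : K → K → Prop)
    (hP : ∀ k, P k k) (hQ : ∀ k, Q k k)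
    (H : ∀ S : Finset K, S.Nonempty → ∃ k ∈ S, ∀ l ∈ S, P l k ∨ Q l k) :
    ∃ p, ∀ q, ∃ k, P p k ∧ Q q k := by
  classical
  by_contra! hcon
  choose J hJ using hcon
  obtain ⟨S, hne, hmaps, hinj⟩ := exists_invariant_injOn J
  obtain ⟨k, hk, hdom⟩ := H S hne
  set M := S.filter fun p => ¬ P p k with hM
  set L := S.filter fun q => ¬ Q q k with hL
  have hdisj : Disjoint M L := by
    rw [Finset.disjoint_left]
    intro l hl hl'
    simp only [hM, hL, Finset.mem_filter] at hl hl'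
    exact (hdom l hl.1).elim hl.2 hl'.2
  have hlt : M.card + L.card < S.card := by
    rw [← Finset.card_union_of_disjoint hdisj]
    apply Finset.card_lt_card
    refine (Finset.ssubset_iff_of_subset ?_).2 ⟨k, hk, by simp [hM, hL, hP, hQ]⟩
    exact Finset.union_subset (Finset.filter_subset _ _) (Finset.filter_subset _ _)
  have hPS : (S.filter fun p => P p k).card ≤ L.card := by
    apply Finset.card_le_card_of_injOn J
    · intro p hp
      obtain ⟨hpS, hpP⟩ := Finset.mem_filter.1 hp
      exact Finset.mem_filter.2 ⟨hmaps p hpS, hJ p k hpP⟩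
    · exact hinj.mono (Finset.filter_subset _ _)
  have hsplit : (S.filter fun p => P p k).card + M.card = S.card := by
    rw [hM]
    convert S.card_filter_add_card_filter_not (fun p => P p k)
  omega

/-- The edge between `u` and `w` is directed one way or the other. -/
lemma dir_of_not_reaches {m n : ℕ} (o : GridOrientation m n) {u w : Fin m × Fin n}
    (hadj : u.1 = w.1 ∨ u.2 = w.2) (hnot : ¬ Reaches o u w) : o.dir w u = true := by
  have hne : u ≠ w := by
    rintro rfl
    exact hnot .refl
  by_contra hc
  exact hnot (.single ((o.dir_total u w ⟨hne, hadj⟩).2 (by simpa using hc)))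

/-- In a USO the two opposite corners `(a, b)` and `(a', b')` of a rectangle cannot both point to
both remaining corners, since the latter would be two sinks. -/
lemma not_two_sources {m n : ℕ} {o : GridOrientation m n} (h : IsUSO o) {a a' : Fin m}
    {b b' : Fin n} (h1 : o.dir (a, b) (a, b') = true) (h2 : o.dir (a, b) (a', b) = true)
    (h3 : o.dir (a', b') (a, b') = true) (h4 : o.dir (a', b') (a', b) = true) : False := by
  have nb {u w} (e : o.dir u w = true) : o.dir w u = false :=
    (o.dir_total u w (o.dir_adj u w e)).1 e
  have loop (u) : o.dir u u = false := by
    by_contra hc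
    exact (o.dir_adj u u (by simpa using hc)).1 rfl
  have hb : b ≠ b' := by
    rintro rfl
    simp [loop] at h1
  have ha : a ≠ a' := by
    rintro rfl
    simp [loop] at h2
  have diag {x x' : Fin m} {y y' : Fin n} (hx : x ≠ x') (hy : y ≠ y') :
      o.dir (x, y) (x', y') = false := by
    by_contra hc
    have := (o.dir_adj _ _ (by simpa using hc)).2
    simp [hx, hy] at this
  have s1 : IsSinkIn o {a, a'} {b, b'} (a, b') := by
    refine ⟨by simp, by simp, ?_⟩
    rintro ⟨x, y⟩ (rfl | rfl) (rfl | rfl)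
    exacts [nb h1, loop _, diag ha hb.symm, nb h3]
  have s2 : IsSinkIn o {a, a'} {b, b'} (a', b) := by
    refine ⟨by simp, by simp, ?_⟩
    rintro ⟨x, y⟩ (rfl | rfl) (rfl | rfl)
    exacts [nb h2, diag ha.symm hb, loop _, nb h4]
  exact ha (congrArg Prod.fst ((h _ _ ⟨a, by simp⟩ ⟨b, by simp⟩).unique s1 s2))

/-- Among any nonempty set of queries, a lowest one `v k` in the reachability preorder has, for
every other `v l`, the row of `v l` in its row set or the column of `v l` in its column set. -/
lemma exists_dominated {m n : ℕ} {K : Type*} {o : GridOrientation m n} (h : IsUSO o)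
    (v : K → Fin m × Fin n) (S : Finset K) (hS : S.Nonempty) :
    ∃ k ∈ S, ∀ l ∈ S, (v l).1 ∈ rowSet o (v k) ∨ (v l).2 ∈ colSet o (v k) := by
  let _ : Preorder K :=
    { le := fun p q => Reaches o (v q) (v p)
      le_refl := fun _ => .refl
      le_trans := fun _ _ _ hpq hqr => hqr.trans hpq }
  obtain ⟨k, hk, hmin⟩ := S.exists_minimal hS
  refine ⟨k, hk, fun l hl => ?_⟩
  by_contra! hc
  obtain ⟨hr, hcol⟩ := hc
  have hr' : o.dir (v k) ((v l).1, (v k).2) = true := dir_of_not_reaches o (.inr rfl) hr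
  have hc' : o.dir (v k) ((v k).1, (v l).2) = true := dir_of_not_reaches o (.inl rfl) hcol
  -- A corner below `v k` that reached `v l` would reach `v k` as well, `v k` being lowest.
  have low {c} (e : o.dir (v k) c = true) (hn : ¬ Reaches o c (v k)) : ¬ Reaches o c (v l) :=
    fun hcl => hn (hcl.trans (hmin hl (Relation.ReflTransGen.head e hcl)))
  exact not_two_sources h hc' hr'
    (dir_of_not_reaches o (.inr rfl) (low hc' hcol))
    (dir_of_not_reaches o (.inl rfl) (low hr' hr))

/-- main combinatorial lemma: after querying `n` vertices of an
`(n,n)`-grid USO lying in pairwise distinct rows and pairwise distinct columns,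
at least one entire row and one entire column are eliminated, i.e. contained in
the union of the subgrids `I_{v k} × J_{v k}`. -/
theorem row_and_column_eliminated {n : ℕ} (hn : 0 < n) (o : GridOrientation n n)
    (h : IsUSO o) (v : Fin n → Fin n × Fin n)
    (hrow : Function.Injective fun k => (v k).1)
    (hcol : Function.Injective fun k => (v k).2) :
    ∃ (r : Fin n) (c : Fin n),
      (∀ j : Fin n, ∃ k : Fin n, r ∈ rowSet o (v k) ∧ j ∈ colSet o (v k)) ∧
      (∀ i : Fin n, ∃ k : Fin n, i ∈ rowSet o (v k) ∧ c ∈ colSet o (v k)) := by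
  have : Nonempty (Fin n) := ⟨⟨0, hn⟩⟩
  have hP : ∀ k, (v k).1 ∈ rowSet o (v k) := fun _ => .refl
  have hQ : ∀ k, (v k).2 ∈ colSet o (v k) := fun _ => .refl
  obtain ⟨p, hp⟩ := exists_forall_covered (fun p k => (v p).1 ∈ rowSet o (v k))
    (fun q k => (v q).2 ∈ colSet o (v k)) hP hQ (exists_dominated h v)
  obtain ⟨q, hq⟩ := exists_forall_covered (fun q k => (v q).2 ∈ colSet o (v k))
    (fun p k => (v p).1 ∈ rowSet o (v k)) hQ hP fun S hS => by
      simpa only [or_comm] using exists_dominated h v S hS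
  refine ⟨(v p).1, (v q).2, fun j => ?_, fun i => ?_⟩
  · obtain ⟨l, rfl⟩ := (Finite.injective_iff_surjective.1 hcol) j
    exact hp l
  · obtain ⟨l, rfl⟩ := (Finite.injective_iff_surjective.1 hrow) i
    obtain ⟨k, hk⟩ := hq l
    exact ⟨k, hk.2, hk.1⟩
end

section
/- (Lower bound) For every deterministic vertex-query algorithm there exists an (m,n)-grid USO on which the global sink does not occur among the first m+n−2 queried vertices; hence at least m+n−1 vertex queries are required in the worst case to find the sink of an (m,n)-grid USO. -/
/-- A deterministic vertex-query algorithm: given the history of queries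
(each query records the queried vertex together with, for every vertex `u`,
whether the edge at the queried vertex is directed towards `u`),
it outputs the next vertex to query. -/
def VertexAlg (m n : ℕ) : Type :=
  List ((Fin m × Fin n) × (Fin m × Fin n → Bool)) → Fin m × Fin n

/-- The history of the first `t` vertex queries of algorithm `A` on orientation `o`. -/
def vertexHist {m n : ℕ} (o : GridOrientation m n) (A : VertexAlg m n) :
    ℕ → List ((Fin m × Fin n) × (Fin m × Fin n → Bool))
  | 0 => []
  | t + 1 =>
    vertexHist o A t ++
      [(A (vertexHist o A t), fun u => o.dir (A (vertexHist o A t)) u)]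

/-- The `t`-th vertex queried by algorithm `A` on orientation `o` (0-indexed). -/
def vertexQueried {m n : ℕ} (o : GridOrientation m n) (A : VertexAlg m n) (t : ℕ) :
    Fin m × Fin n :=
  A (vertexHist o A t)

/-- The orientation in which an edge within a column points to the larger row key `r`, and an edge
within row `i` points to the larger key `c i`. -/
def rankOrientation {m n : ℕ} {α β : Type} [LinearOrder α] [LinearOrder β]
    (r : Fin m → α) (c : Fin m → Fin n → β) (hr : Function.Injective r)
    (hc : ∀ i, Function.Injective (c i)) : GridOrientation m n where
  dir u v := decide ((u.2 = v.2 ∧ r u.1 < r v.1) ∨ (u.1 = v.1 ∧ c u.1 u.2 < c u.1 v.2))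
  dir_adj := by
    rintro ⟨i, j⟩ ⟨i', j'⟩ h
    simp only [decide_eq_true_eq] at h
    refine ⟨?_, by tauto⟩
    rintro h'
    obtain ⟨rfl, rfl⟩ := Prod.mk.inj h'
    simp at h
  dir_total := by
    rintro ⟨i, j⟩ ⟨i', j'⟩ ⟨hne, h⟩
    simp only [decide_eq_true_eq, decide_eq_false_iff_not]
    rcases h with h | h <;> simp only at h <;> subst h
    · have : c i j ≠ c i j' := fun e => hne (by rw [hc i e])
      simp only [lt_self_iff_false, and_false, true_and, false_or, not_lt]
      exact ⟨le_of_lt, fun h => lt_of_le_of_ne h this⟩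
    · have : r i ≠ r i' := fun e => hne (by rw [hr e])
      simp only [lt_self_iff_false, and_false, true_and, or_false, not_lt]
      exact ⟨le_of_lt, fun h => lt_of_le_of_ne h this⟩

section rank

variable {m n : ℕ} {α β : Type} [LinearOrder α] [LinearOrder β]
  {r : Fin m → α} {c : Fin m → Fin n → β} {hr : Function.Injective r}
  {hc : ∀ i, Function.Injective (c i)}

theorem rankOrientation_dir_eq_false (u v : Fin m × Fin n) :
    (rankOrientation r c hr hc).dir u v = false ↔
      (u.2 = v.2 → r v.1 ≤ r u.1) ∧ (u.1 = v.1 → c u.1 v.2 ≤ c u.1 u.2) := by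
  simp [rankOrientation]

theorem isSinkIn_rankOrientation (I : Set (Fin m)) (J : Set (Fin n)) (v : Fin m × Fin n) :
    IsSinkIn (rankOrientation r c hr hc) I J v ↔
      v.1 ∈ I ∧ v.2 ∈ J ∧ (∀ i ∈ I, r i ≤ r v.1) ∧ (∀ j ∈ J, c v.1 j ≤ c v.1 v.2) := by
  simp only [IsSinkIn, rankOrientation_dir_eq_false]
  constructor
  · rintro ⟨h1, h2, h⟩
    exact ⟨h1, h2, fun i hi => (h (i, v.2) hi h2).1 rfl, fun j hj => (h (v.1, j) h1 hj).2 rfl⟩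
  · rintro ⟨h1, h2, h3, h4⟩
    exact ⟨h1, h2, fun u hu1 hu2 => ⟨fun _ => h3 _ hu1, fun _ => h4 _ hu2⟩⟩

theorem isUSO_rankOrientation : IsUSO (rankOrientation r c hr hc) := by
  intro I J hI hJ
  obtain ⟨i, hi, hi'⟩ := Set.exists_max_image I r I.toFinite hI
  obtain ⟨j, hj, hj'⟩ := Set.exists_max_image J (c i) J.toFinite hJ
  refine ⟨(i, j), (isSinkIn_rankOrientation I J _).2 ⟨hi, hj, hi', hj'⟩, ?_⟩
  rintro ⟨a, b⟩ h
  obtain ⟨ha, hb, h1, h2⟩ := (isSinkIn_rankOrientation I J _).1 h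
  obtain rfl : a = i := hr (le_antisymm (hi' _ ha) (h1 _ hi))
  obtain rfl : b = j := hc _ (le_antisymm (hj' _ hb) (h2 _ hj))
  rfl

end rank

/-- Key of `a` in the linear order listing the entries of `L` first, in their order in `L`, and all
other elements afterwards in the natural order (`L.idxOf a = L.length` when `a ∉ L`). -/
def elimKey {k : ℕ} (L : List (Fin k)) (a : Fin k) : ℕ ×ₗ Fin k := toLex (L.idxOf a, a)

theorem elimKey_injective {k : ℕ} (L : List (Fin k)) : Function.Injective (elimKey L) := by
  intro a b h
  exact (Prod.mk.inj (toLex.injective h)).2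

theorem elimKey_lt_of_mem {k : ℕ} {L : List (Fin k)} {a b : Fin k} (ha : a ∈ L) (hb : b ∉ L) :
    elimKey L a < elimKey L b := by
  have h1 := List.idxOf_lt_length_iff.2 ha
  have h2 := List.idxOf_eq_length_iff.2 hb
  refine Prod.Lex.toLex_lt_toLex.2 (Or.inl ?_)
  simp only
  omega

/-- Eliminating `x` does not affect comparisons with an already eliminated element. -/
theorem elimKey_append {k : ℕ} {L : List (Fin k)} {a : Fin k} (x : Fin k) (ha : a ∈ L)
    (b : Fin k) : elimKey (L ++ [x]) b ≤ elimKey (L ++ [x]) a ↔ elimKey L b ≤ elimKey L a := by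
  by_cases hb : b ∈ L
  · simp only [elimKey, List.idxOf_append_of_mem ha, List.idxOf_append_of_mem hb]
  · have h1 := elimKey_lt_of_mem ha hb
    have h2 : elimKey (L ++ [x]) a < elimKey (L ++ [x]) b := by
      refine Prod.Lex.toLex_lt_toLex.2 (Or.inl ?_)
      have := List.idxOf_lt_length_iff.2 ha
      simp only [List.idxOf_append_of_mem ha, List.idxOf_append_of_notMem hb]
      omega
    exact ⟨fun h => absurd h (not_le.2 h2), fun h => absurd h (not_le.2 h1)⟩

theorem exists_not_mem_of_length_lt {k : ℕ} {L : List (Fin k)} (h : L.length < k) :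
    ∃ a, a ∉ L := by
  by_contra! hall
  have h1 : L.toFinset = Finset.univ := by ext a; simp [hall a]
  have h2 := L.toFinset_card_le
  rw [h1, Finset.card_univ, Fintype.card_fin] at h2
  omega

/-- The adversary's orientation after eliminating the rows in `L` and the columns in `K`. -/
def elimOrientation {m n : ℕ} (L : List (Fin m)) (K : List (Fin n)) : GridOrientation m n :=
  rankOrientation (elimKey L) (fun i => if i ∈ L then elimKey [] else elimKey K)
    (elimKey_injective L) (fun i => by
      split_ifs
      · exact elimKey_injective []
      · exact elimKey_injective K)

theorem elimOrientation_append_row {m n : ℕ} {L : List (Fin m)} (x : Fin m)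
    {v : Fin m × Fin n} (hv : v.1 ∈ L) :
    (elimOrientation (L ++ [x]) ([] : List (Fin n))).dir v = (elimOrientation L []).dir v := by
  funext u
  rw [Bool.eq_iff_iff, ← not_iff_not, Bool.not_eq_true, Bool.not_eq_true]
  simp only [elimOrientation, rankOrientation_dir_eq_false, ite_self, elimKey_append x hv]

theorem elimOrientation_append_col {m n : ℕ} {L : List (Fin m)} {K : List (Fin n)} (y : Fin n)
    {v : Fin m × Fin n} (hv : v.1 ∈ L ∨ v.2 ∈ K) :
    (elimOrientation L (K ++ [y])).dir v = (elimOrientation L K).dir v := by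
  funext u
  rw [Bool.eq_iff_iff, ← not_iff_not, Bool.not_eq_true, Bool.not_eq_true]
  simp only [elimOrientation, rankOrientation_dir_eq_false]
  by_cases h : v.1 ∈ L
  · simp only [h, if_true]
  · have hK : v.2 ∈ K := hv.resolve_left h
    simp only [h, if_false, elimKey_append y hK]

/-- The sink survives as long as some row and some column do. -/
theorem elimOrientation_sink {m n : ℕ} {L : List (Fin m)} {K : List (Fin n)}
    (hL : L.length < m) (hK : K.length < n) {s : Fin m × Fin n}
    (hs : IsGlobalSink (elimOrientation L K) s) : s.1 ∉ L ∧ s.2 ∉ K := by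
  obtain ⟨-, -, h1, h2⟩ := (isSinkIn_rankOrientation _ _ _).1 hs
  obtain ⟨i, hi⟩ := exists_not_mem_of_length_lt hL
  obtain ⟨j, hj⟩ := exists_not_mem_of_length_lt hK
  have hsL : s.1 ∉ L := fun h => absurd (h1 i trivial) (not_le.2 (elimKey_lt_of_mem h hi))
  refine ⟨hsL, fun h => ?_⟩
  have := h2 j trivial
  simp only [hsL, if_false] at this
  exact absurd this (not_le.2 (elimKey_lt_of_mem h hj))

/-- Orientations that agree at the first `t` queried vertices produce the same history. -/
theorem vertexHist_congr {m n : ℕ} {o o' : GridOrientation m n} {A : VertexAlg m n} {t : ℕ}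
    (h : ∀ k < t, o'.dir (vertexQueried o A k) = o.dir (vertexQueried o A k)) :
    ∀ k ≤ t, vertexHist o' A k = vertexHist o A k := by
  intro k
  induction k with
  | zero => intro _; rfl
  | succ k ih =>
    intro hk
    have h1 := ih (by omega)
    have h2 := h k (by omega)
    simp only [vertexQueried] at h2
    simp only [vertexHist, h1, h2]

/-- The adversary's invariant: the first `t` queries can be answered so that all of them are
eliminated, using at most `t` eliminations and starting on columns only when one row is left. -/
theorem exists_elimination {m n : ℕ} (hm : 0 < m) (hn : 0 < n) (A : VertexAlg m n) (t : ℕ)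
    (ht : t ≤ m + n - 2) :
    ∃ (L : List (Fin m)) (K : List (Fin n)), L.length < m ∧ K.length < n ∧
      L.length + K.length ≤ t ∧ (L.length + 1 < m → K = []) ∧
      ∀ k < t, (vertexQueried (elimOrientation L K) A k).1 ∈ L ∨
        (vertexQueried (elimOrientation L K) A k).2 ∈ K := by
  induction t with
  | zero => exact ⟨[], [], by simpa using hm, by simpa using hn, by simp, by simp, by simp⟩
  | succ t ih =>
    obtain ⟨L, K, hL, hK, hLK, hrow, hdead⟩ := ih (by omega)
    set o := elimOrientation L K with ho
    by_cases hd : (vertexQueried o A t).1 ∈ L ∨ (vertexQueried o A t).2 ∈ K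
    · refine ⟨L, K, hL, hK, by omega, hrow, fun k hk => ?_⟩
      rcases Nat.lt_succ_iff_lt_or_eq.1 hk with hk | rfl
      · exact hdead k hk
      · exact hd
    by_cases hr : L.length + 1 < m
    · obtain rfl := hrow hr
      have hq : ∀ k ≤ t, vertexQueried (elimOrientation (L ++ [(vertexQueried o A t).1]) []) A k =
          vertexQueried o A k := fun k hk =>
        congrArg A (vertexHist_congr (fun k hk =>
          elimOrientation_append_row _ (by simpa using hdead k hk)) k hk)
      refine ⟨L ++ [(vertexQueried o A t).1], [], by simpa using hr, hK,
        by simpa using hLK, fun _ => rfl, fun k hk => ?_⟩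
      rw [hq k (by omega)]
      rcases Nat.lt_succ_iff_lt_or_eq.1 hk with hk | rfl
      · have := hdead k hk
        simp only [List.mem_append]
        tauto
      · simp
    · have hq : ∀ k ≤ t, vertexQueried (elimOrientation L (K ++ [(vertexQueried o A t).2])) A k =
          vertexQueried o A k := fun k hk =>
        congrArg A (vertexHist_congr (fun k hk =>
          elimOrientation_append_col _ (hdead k hk)) k hk)
      refine ⟨L, K ++ [(vertexQueried o A t).2], hL, ?_, ?_, fun h => absurd h hr,
        fun k hk => ?_⟩
      · simp only [List.length_append, List.length_singleton]
        omega
      · simp only [List.length_append, List.length_singleton]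
        omega
      rw [hq k (by omega)]
      rcases Nat.lt_succ_iff_lt_or_eq.1 hk with hk | rfl
      · have := hdead k hk
        simp only [List.mem_append]
        tauto
      · simp

/-- lower bound: for every deterministic vertex-query algorithm there
is an `(m,n)`-grid USO whose global sink is not among the first `m + n - 2` queried
vertices; hence `m + n - 1` vertex queries are required in the worst case. -/
theorem vertex_query_lower_bound (m n : ℕ) (hm : 0 < m) (hn : 0 < n) :
    ∀ A : VertexAlg m n, ∃ o : GridOrientation m n, IsUSO o ∧
      ∀ s : Fin m × Fin n, IsGlobalSink o s →
        ∀ t < m + n - 2, vertexQueried o A t ≠ s := by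
  intro A
  obtain ⟨L, K, hL, hK, -, -, hdead⟩ := exists_elimination hm hn A (m + n - 2) le_rfl
  refine ⟨elimOrientation L K, isUSO_rankOrientation, fun s hs t ht h => ?_⟩
  obtain ⟨h1, h2⟩ := elimOrientation_sink hL hK hs
  have := hdead t ht
  rw [h] at this
  tauto
end

section
/- Let G be an (m,n)-grid USO, let P = {P_1,…,P_k} be a partition of Fin m into nonempty sets and Q = {Q_1,…,Q_l} a partition of Fin n into nonempty sets, and for each block x = P_i × Q_j let s_x denote the unique sink of the subgrid x in G. Then for any two distinct blocks x and y in the same block-row (same P_i) or the same block-column (same Q_j), exactly one of the following holds: s_x has an outgoing edge in G to some vertex of y, or s_y has an outgoing edge in G to some vertex of x. Hence the induced orientation on the (k,l)-grid of blocks is well-defined. -/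
/-- The dichotomy for two subgrids `I × J` and `I' × J'` with distinct sinks whose union is the
whole subgrid `(I ∪ I') × (J ∪ J')`. Disjointness of the blocks enters only through `v ≠ w`. -/
lemma xor_outgoing_of_union {m n : ℕ} {o : GridOrientation m n} (h : IsUSO o)
    {I I' : Set (Fin m)} {J J' : Set (Fin n)} {v w : Fin m × Fin n}
    (hv : IsSinkIn o I J v) (hw : IsSinkIn o I' J' w) (hvw : v ≠ w)
    (hU : ∀ u : Fin m × Fin n, u.1 ∈ I ∪ I' → u.2 ∈ J ∪ J' →
      (u.1 ∈ I ∧ u.2 ∈ J) ∨ (u.1 ∈ I' ∧ u.2 ∈ J')) :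
    Xor' (∃ u : Fin m × Fin n, u.1 ∈ I' ∧ u.2 ∈ J' ∧ o.dir v u = true)
      (∃ u : Fin m × Fin n, u.1 ∈ I ∧ u.2 ∈ J ∧ o.dir w u = true) := by
  obtain ⟨t, ⟨ht1, ht2, ht⟩, huniq⟩ :=
    h (I ∪ I') (J ∪ J') ⟨v.1, Or.inl hv.1⟩ ⟨v.2, Or.inl hv.2.1⟩
  -- A block sink without an edge into the other block is a sink of the union.
  have hv_eq : (¬ ∃ u : Fin m × Fin n, u.1 ∈ I' ∧ u.2 ∈ J' ∧ o.dir v u = true) → v = t := by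
    intro hno
    refine huniq v ⟨Or.inl hv.1, Or.inl hv.2.1, fun u h1 h2 => ?_⟩
    rcases hU u h1 h2 with ⟨a, b⟩ | ⟨a, b⟩
    · exact hv.2.2 u a b
    · exact Bool.eq_false_iff.2 fun hd => hno ⟨u, a, b, hd⟩
  have hw_eq : (¬ ∃ u : Fin m × Fin n, u.1 ∈ I ∧ u.2 ∈ J ∧ o.dir w u = true) → w = t := by
    intro hno
    refine huniq w ⟨Or.inr hw.1, Or.inr hw.2.1, fun u h1 h2 => ?_⟩
    rcases hU u h1 h2 with ⟨a, b⟩ | ⟨a, b⟩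
    · exact Bool.eq_false_iff.2 fun hd => hno ⟨u, a, b, hd⟩
    · exact hw.2.2 u a b
  rcases hU t ht1 ht2 with ⟨a, b⟩ | ⟨a, b⟩
  · have hvt : v = t := (h I J ⟨_, a⟩ ⟨_, b⟩).unique hv
      ⟨a, b, fun u h1 h2 => ht u (Or.inl h1) (Or.inl h2)⟩
    refine Or.inr ⟨by_contra fun hno => hvw (hvt.trans (hw_eq hno).symm), ?_⟩
    rintro ⟨u, h1, h2, hd⟩
    rw [hvt, ht u (Or.inr h1) (Or.inr h2)] at hd
    exact Bool.false_ne_true hd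
  · have hwt : w = t := (h I' J' ⟨_, a⟩ ⟨_, b⟩).unique hw
      ⟨a, b, fun u h1 h2 => ht u (Or.inr h1) (Or.inr h2)⟩
    refine Or.inl ⟨by_contra fun hno => hvw ((hv_eq hno).trans hwt.symm), ?_⟩
    rintro ⟨u, h1, h2, hd⟩
    rw [hwt, ht u (Or.inl h1) (Or.inl h2)] at hd
    exact Bool.false_ne_true hd

/-- given partitions `P` of `Fin m` and `Q` of `Fin n` into nonempty
blocks, and the unique sinks `s x` of the blocks, any two distinct blocks `x`, `y`
in the same block-row or block-column satisfy exactly one of: the sink of `x` has an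
outgoing edge into `y`, or the sink of `y` has an outgoing edge into `x`. Hence the
induced orientation on the `(k,l)`-grid of blocks is well-defined. -/
theorem induced_orientation_well_defined {m n k l : ℕ} (o : GridOrientation m n)
    (h : IsUSO o)
    (P : Fin k → Set (Fin m)) (Q : Fin l → Set (Fin n))
    (hPne : ∀ i, (P i).Nonempty) (hQne : ∀ j, (Q j).Nonempty)
    (hPdis : ∀ i i', i ≠ i' → Disjoint (P i) (P i'))
    (hQdis : ∀ j j', j ≠ j' → Disjoint (Q j) (Q j'))
    (hPcov : ∀ a : Fin m, ∃ i, a ∈ P i) (hQcov : ∀ b : Fin n, ∃ j, b ∈ Q j)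
    (s : Fin k × Fin l → Fin m × Fin n)
    (hs : ∀ x : Fin k × Fin l, IsSinkIn o (P x.1) (Q x.2) (s x)) :
    ∀ x y : Fin k × Fin l, x ≠ y → (x.1 = y.1 ∨ x.2 = y.2) →
      Xor' (∃ u : Fin m × Fin n, u.1 ∈ P y.1 ∧ u.2 ∈ Q y.2 ∧ o.dir (s x) u = true)
           (∃ u : Fin m × Fin n, u.1 ∈ P x.1 ∧ u.2 ∈ Q x.2 ∧ o.dir (s y) u = true) := by
  intro x y hxy hadj
  refine xor_outgoing_of_union h (hs x) (hs y) ?_ ?_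
  · intro heq
    have hx := hs x
    rw [heq] at hx
    refine hxy (Prod.ext (by_contra fun hne => ?_) (by_contra fun hne => ?_))
    · exact Set.disjoint_left.1 (hPdis _ _ hne) hx.1 (hs y).1
    · exact Set.disjoint_left.1 (hQdis _ _ hne) hx.2.1 (hs y).2.1
  · intro u h1 h2
    rcases hadj with e | e
    · rw [e, Set.union_self] at h1
      rw [e]
      exact h2.imp (fun q => ⟨h1, q⟩) (fun q => ⟨h1, q⟩)
    · rw [e, Set.union_self] at h2
      rw [e]
      exact h1.imp (fun p => ⟨p, h2⟩) (fun p => ⟨p, h2⟩)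
end

section
/- Let G be an (m,n)-grid USO, let P = {P_1,…,P_k} be a partition of Fin m into nonempty sets and Q = {Q_1,…,Q_l} a partition of Fin n into nonempty sets, and let H be the induced orientation of the (k,l)-grid whose vertices are the blocks P_i × Q_j, where a block x points to a block y (x, y in the same block-row or block-column) iff the unique sink of the subgrid x in G has an outgoing edge in G to some vertex of y. Then H is a (k,l)-grid USO. -/
/-- the induced orientation `H` on the `(k,l)`-grid of blocks of the
partitions `P`, `Q` — where block `x` points to block `y` iff the unique sink of
block `x` has an outgoing edge into `y` — is again a grid USO. -/
theorem induced_orientation_is_uso {m n k l : ℕ} (o : GridOrientation m n)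
    (h : IsUSO o)
    (P : Fin k → Set (Fin m)) (Q : Fin l → Set (Fin n))
    (hPne : ∀ i, (P i).Nonempty) (hQne : ∀ j, (Q j).Nonempty)
    (hPdis : ∀ i i', i ≠ i' → Disjoint (P i) (P i'))
    (hQdis : ∀ j j', j ≠ j' → Disjoint (Q j) (Q j'))
    (hPcov : ∀ a : Fin m, ∃ i, a ∈ P i) (hQcov : ∀ b : Fin n, ∃ j, b ∈ Q j)
    (s : Fin k × Fin l → Fin m × Fin n)
    (hs : ∀ x : Fin k × Fin l, IsSinkIn o (P x.1) (Q x.2) (s x))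
    (H : GridOrientation k l)
    (hH : ∀ x y : Fin k × Fin l, GridAdj x y →
      (H.dir x y = true ↔ ∃ u : Fin m × Fin n, u.1 ∈ P y.1 ∧ u.2 ∈ Q y.2 ∧
        o.dir (s x) u = true)) :
    IsUSO H := by
  intro I J ⟨i₀, hi₀⟩ ⟨j₀, hj₀⟩
  -- A block that is a sink in `H` has a representative that is a sink of the union of the blocks.
  have key : ∀ x : Fin k × Fin l, IsSinkIn H I J x →
      IsSinkIn o (⋃ i ∈ I, P i) (⋃ j ∈ J, Q j) (s x) := by
    rintro x ⟨hxI, hxJ, hx⟩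
    obtain ⟨hs1, hs2, hs3⟩ := hs x
    refine ⟨Set.mem_biUnion hxI hs1, Set.mem_biUnion hxJ hs2, fun u hu1 hu2 => ?_⟩
    simp only [Set.mem_iUnion, exists_prop] at hu1 hu2
    obtain ⟨i, hi, hui⟩ := hu1
    obtain ⟨j, hj, huj⟩ := hu2
    by_contra hne
    have hd : o.dir (s x) u = true := by simpa using hne
    by_cases hxy : x = (i, j)
    · subst hxy
      exact hne (hs3 u hui huj)
    · have hadj : GridAdj x (i, j) := by
        refine ⟨hxy, ?_⟩
        rcases (o.dir_adj _ _ hd).2 with e | e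
        · left
          by_contra hc
          exact Set.disjoint_left.mp (hPdis _ _ hc) hs1 (e ▸ hui)
        · right
          by_contra hc
          exact Set.disjoint_left.mp (hQdis _ _ hc) hs2 (e ▸ huj)
      have hH' := (hH x (i, j) hadj).2 ⟨u, hui, huj, hd⟩
      simp [hx (i, j) hi hj] at hH'
  obtain ⟨v, hv, hvu⟩ := h (⋃ i ∈ I, P i) (⋃ j ∈ J, Q j)
    ((hPne i₀).mono (Set.subset_biUnion_of_mem hi₀))
    ((hQne j₀).mono (Set.subset_biUnion_of_mem hj₀))
  obtain ⟨hv1, hv2, hv3⟩ := hv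
  have hv1' := hv1
  have hv2' := hv2
  simp only [Set.mem_iUnion, exists_prop] at hv1' hv2'
  obtain ⟨i, hi, hvi⟩ := hv1'
  obtain ⟨j, hj, hvj⟩ := hv2'
  have hsv : s (i, j) = v :=
    (h (P i) (Q j) (hPne i) (hQne j)).unique (hs (i, j))
      ⟨hvi, hvj, fun u h1 h2 => hv3 u (Set.mem_biUnion hi h1) (Set.mem_biUnion hj h2)⟩
  refine ⟨(i, j), ⟨hi, hj, fun y hy1 hy2 => ?_⟩, fun x hx => ?_⟩
  · by_contra hne
    have hd : H.dir (i, j) y = true := by simpa using hne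
    obtain ⟨u, hu1, hu2, hu⟩ := (hH _ _ (H.dir_adj _ _ hd)).1 hd
    rw [hsv, hv3 u (Set.mem_biUnion hy1 hu1) (Set.mem_biUnion hy2 hu2)] at hu
    exact Bool.false_ne_true hu
  · have hxv : s x = v := hvu _ (key x hx)
    obtain ⟨hs1, hs2, -⟩ := hs x
    rw [hxv] at hs1 hs2
    -- Distinct blocks are disjoint, so `v` determines its block.
    refine Prod.ext ?_ ?_
    · by_contra hc
      exact Set.disjoint_left.mp (hPdis _ _ hc) hs1 hvi
    · by_contra hc
      exact Set.disjoint_left.mp (hQdis _ _ hc) hs2 hvj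
end

section
/- Let G be an (m,n)-grid USO, let P = {P_1,…,P_k} be a partition of Fin m into nonempty sets and Q = {Q_1,…,Q_l} a partition of Fin n into nonempty sets, and let H be the induced orientation of the (k,l)-grid whose vertices are the blocks P_i × Q_j, where a block x points to a block y (x, y in the same block-row or block-column) iff the unique sink of the subgrid x in G has an outgoing edge in G to some vertex of y. Then the global sink of H is exactly the block P_i × Q_j that contains the global sink of G. -/
/-- the global sink of the induced orientation `H` on the grid of
blocks is exactly the block containing the global sink of `G`. -/
theorem induced_orientation_sink_block {m n k l : ℕ} (o : GridOrientation m n)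
    (h : IsUSO o)
    (P : Fin k → Set (Fin m)) (Q : Fin l → Set (Fin n))
    (hPne : ∀ i, (P i).Nonempty) (hQne : ∀ j, (Q j).Nonempty)
    (hPdis : ∀ i i', i ≠ i' → Disjoint (P i) (P i'))
    (hQdis : ∀ j j', j ≠ j' → Disjoint (Q j) (Q j'))
    (hPcov : ∀ a : Fin m, ∃ i, a ∈ P i) (hQcov : ∀ b : Fin n, ∃ j, b ∈ Q j)
    (s : Fin k × Fin l → Fin m × Fin n)
    (hs : ∀ x : Fin k × Fin l, IsSinkIn o (P x.1) (Q x.2) (s x))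
    (H : GridOrientation k l)
    (hH : ∀ x y : Fin k × Fin l, GridAdj x y →
      (H.dir x y = true ↔ ∃ u : Fin m × Fin n, u.1 ∈ P y.1 ∧ u.2 ∈ Q y.2 ∧
        o.dir (s x) u = true)) :
    ∀ b : Fin k × Fin l, IsGlobalSink H b →
      ∀ g : Fin m × Fin n, IsGlobalSink o g → g.1 ∈ P b.1 ∧ g.2 ∈ Q b.2 := by
  intro b hb g hg
  -- A block sharing a block-row or block-column with `b` contains no out-neighbour of `s b`.
  have key : ∀ (y : Fin k × Fin l) (u : Fin m × Fin n), (b.1 = y.1 ∨ b.2 = y.2) →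
      u.1 ∈ P y.1 → u.2 ∈ Q y.2 → o.dir (s b) u = false := by
    intro y u hby hu1 hu2
    by_cases e : b = y
    · subst e
      exact (hs b).2.2 u hu1 hu2
    · by_contra hne
      have hd : H.dir b y = true :=
        (hH b y ⟨e, hby⟩).2 ⟨u, hu1, hu2, Bool.eq_true_of_not_eq_false hne⟩
      have hf := hb.2.2 y (Set.mem_univ _) (Set.mem_univ _)
      exact absurd (hd.symm.trans hf) (by decide)
  have hsb : IsGlobalSink o (s b) := by
    refine ⟨Set.mem_univ _, Set.mem_univ _, fun u _ _ => ?_⟩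
    by_contra hne
    obtain ⟨-, e | e⟩ := o.dir_adj _ _ (Bool.eq_true_of_not_eq_false hne)
    · obtain ⟨j, hj⟩ := hQcov u.2
      exact hne (key (b.1, j) u (Or.inl rfl) (e ▸ (hs b).1) hj)
    · obtain ⟨i, hi⟩ := hPcov u.1
      exact hne (key (i, b.2) u (Or.inr rfl) hi (e ▸ (hs b).2.1))
  have hgs : g = s b :=
    (h Set.univ Set.univ ⟨g.1, Set.mem_univ _⟩ ⟨g.2, Set.mem_univ _⟩).unique hg hsb
  rw [hgs]
  exact ⟨(hs b).1, (hs b).2.1⟩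
end

section
/- (Divide-and-conquer recurrence) Let k divide n, and suppose T is a number of edge queries such that some deterministic edge-query algorithm finds the global sink of every (n/k, n/k)-grid USO within T edge queries. Then there is a deterministic edge-query algorithm that finds the global sink of every (n,n)-grid USO within (2k−1)·(T + 2n − 2) edge queries. -/
/-- A deterministic edge-query algorithm: given the history of queries
(each query records the queried ordered pair of vertices together with the
answer whether the edge is directed from the first to the second vertex),
it either outputs the next edge to query or a final output vertex. -/
def EdgeAlg (m n : ℕ) : Type :=
  List (((Fin m × Fin n) × (Fin m × Fin n)) × Bool) →
    ((Fin m × Fin n) × (Fin m × Fin n)) ⊕ (Fin m × Fin n)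

/-- Running an edge-query algorithm for `t` steps: returns the query history so far
and, once the algorithm has stopped, its final output vertex. -/
def edgeRun {m n : ℕ} (o : GridOrientation m n) (A : EdgeAlg m n) :
    ℕ → List (((Fin m × Fin n) × (Fin m × Fin n)) × Bool) × Option (Fin m × Fin n)
  | 0 => ([], none)
  | t + 1 =>
    match edgeRun o A t with
    | (h, some v) => (h, some v)
    | (h, none) =>
      match A h with
      | Sum.inl e => (h ++ [(e, o.dir e.1 e.2)], none)
      | Sum.inr v => (h, some v)

/-- The edge-query algorithm `A` finds the sink of `o` within `k` edge queries:
after making at most `k` queries it stops and outputs the global sink. -/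
def EdgeFindsSinkWithin {m n : ℕ} (o : GridOrientation m n) (A : EdgeAlg m n) (k : ℕ) : Prop :=
  ∀ s : Fin m × Fin n, IsGlobalSink o s → (edgeRun o A (k + 1)).2 = some s

/-! ### The query game on blocks -/

/-- A record of one evaluated block: its position `(a, b)` among the `k × k` blocks, together
with the set of block rows and the set of block columns into which the sink of that block has no
outgoing edge. -/
abbrev Entry (k : ℕ) : Type :=
  (Fin k × Fin k) × Finset (Fin k) × Finset (Fin k)

/-- `a` was evaluated before `b`: the lines of `b` are new, `b` was chosen outside the two
dominated sets of `a`, and one of these sets is contained in the corresponding set of `b`. -/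
def Precedes {k : ℕ} (a b : Entry k) : Prop :=
  (a.1.1 ≠ b.1.1 ∧ a.1.2 ≠ b.1.2) ∧ (a.2.1 ⊆ b.2.1 ∨ a.2.2 ⊆ b.2.2)

/-- The bookkeeping invariant after the evaluations `h`: the block of the global sink is known to
lie in the active lines `R × C`, and `L` is a chain of evaluated blocks inside `R × C` such that
the number of evaluations is the length of `L` plus the number of eliminated lines. -/
structure ChainInv {k : ℕ} (h : List (Entry k)) (R C : Finset (Fin k)) (L : List (Entry k)) :
    Prop where
  mem : ∀ e ∈ L, e ∈ h
  pos : ∀ e ∈ L, (e.1.1 ∈ R ∧ e.1.2 ∈ C) ∧ e.1.1 ∈ e.2.1 ∧ e.1.2 ∈ e.2.2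
  chain : L.Pairwise Precedes
  count : h.length + R.card + C.card = L.length + 2 * k
  sound : ∀ s : Fin k × Fin k, (∀ e ∈ h, ¬ (s.1 ∈ e.2.1 ∧ s.2 ∈ e.2.2)) → s.1 ∈ R ∧ s.2 ∈ C

/-- `p` is an admissible next block to evaluate: it lies in the active lines and outside all
dominated sets of the chain. -/
def Good {k : ℕ} (h : List (Entry k)) (p : Fin k × Fin k) : Prop :=
  ∃ R C L, ChainInv h R C L ∧ (p.1 ∈ R ∧ p.2 ∈ C) ∧ ∀ e ∈ L, p.1 ∉ e.2.1 ∧ p.2 ∉ e.2.2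

/-- In a chain where of any two members the earlier is below the later in `f` or in `g`, some
member `a` is such that everything covered by the `g`-sets is already covered by the `g`-sets of
the members whose `f`-set contains `f a`. -/
lemma exists_pivot {α β γ : Type*} (f : α → Finset β) (g : α → Finset γ) :
    ∀ (N : ℕ) (L : List α), L.length ≤ N → L ≠ [] →
      L.Pairwise (fun a b => f b ⊆ f a ∨ g b ⊆ g a) →
      ∃ a ∈ L, ∀ c, (∃ b ∈ L, c ∈ g b) → ∃ b ∈ L, c ∈ g b ∧ f a ⊆ f b := by
  classical
  intro N
  induction N with
  | zero =>
    intro L hL hne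
    exact absurd (List.length_eq_zero_iff.1 (Nat.le_zero.1 hL)) hne
  | succ N ih =>
    intro L hL hne hp
    obtain _ | ⟨w, L⟩ := L
    · exact absurd rfl hne
    rw [List.pairwise_cons] at hp
    have hcov : ∀ b ∈ L, ¬ f b ⊆ f w → g b ⊆ g w := fun b hb h => (hp.1 b hb).resolve_left h
    -- Only the members below the last one in `f` matter: the others have `g`-sets inside `g w`.
    by_cases hA : L.filter (fun b => f b ⊆ f w) = []
    · refine ⟨w, by simp, ?_⟩
      rintro c ⟨b, hb, hc⟩
      refine ⟨w, by simp, ?_, subset_rfl⟩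
      rcases List.mem_cons.1 hb with rfl | hb
      · exact hc
      · refine hcov b hb (fun h => ?_) hc
        have : b ∈ L.filter (fun b => f b ⊆ f w) := by simp [hb, h]
        simp [hA] at this
    · have hlen : (L.filter (fun b => f b ⊆ f w)).length ≤ N :=
        (List.length_filter_le _ _).trans (by simpa using hL)
      obtain ⟨a, ha, hcover⟩ := ih _ hlen hA (hp.2.sublist List.filter_sublist)
      have ha' : a ∈ L ∧ f a ⊆ f w := by simpa using ha
      refine ⟨a, by simp [ha'.1], ?_⟩
      rintro c ⟨b, hb, hc⟩
      by_cases hw : c ∈ g w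
      · exact ⟨w, by simp, hw, ha'.2⟩
      · have hbL : b ∈ L := by
          rcases List.mem_cons.1 hb with rfl | hb
          · exact absurd hc hw
          · exact hb
        have hbA : f b ⊆ f w := by
          by_contra h
          exact hw (hcov b hbL h hc)
        obtain ⟨b', hb', h1, h2⟩ := hcover c ⟨b, by simp [hbL, hbA], hc⟩
        exact ⟨b', by simp [(List.mem_filter.1 hb').1], h1, h2⟩

lemma Precedes.chain_pivot {k : ℕ} {L : List (Entry k)} (hne : L ≠ [])
    (hp : L.Pairwise Precedes) :
    (∃ a ∈ L, ∀ c, (∃ b ∈ L, c ∈ b.2.2) → ∃ b ∈ L, c ∈ b.2.2 ∧ a.2.1 ⊆ b.2.1) ∧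
    (∃ a ∈ L, ∀ c, (∃ b ∈ L, c ∈ b.2.1) → ∃ b ∈ L, c ∈ b.2.1 ∧ a.2.2 ⊆ b.2.2) := by
  have hne' : L.reverse ≠ [] := by simpa using hne
  have h1 : L.reverse.Pairwise (fun a b => b.2.1 ⊆ a.2.1 ∨ b.2.2 ⊆ a.2.2) :=
    List.pairwise_reverse.2 (hp.imp fun h => h.2)
  have h2 : L.reverse.Pairwise (fun a b => b.2.2 ⊆ a.2.2 ∨ b.2.1 ⊆ a.2.1) :=
    h1.imp fun h => h.symm
  have e1 := exists_pivot (fun e : Entry k => e.2.1) (fun e => e.2.2) _ _ le_rfl hne' h1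
  have e2 := exists_pivot (fun e : Entry k => e.2.2) (fun e => e.2.1) _ _ le_rfl hne' h2
  simp only [List.mem_reverse] at e1 e2
  exact ⟨e1, e2⟩

/-- As long as the position of the sink is not excluded by the answers, there is an admissible
block: whenever the chain dominates all active rows or all active columns, a line together with
one member of the chain can be discarded. -/
lemma exists_good {k : ℕ} {h : List (Entry k)} {s : Fin k × Fin k}
    (hs : ∀ e ∈ h, ¬ (s.1 ∈ e.2.1 ∧ s.2 ∈ e.2.2)) :
    ∀ (N : ℕ) (R C : Finset (Fin k)) (L : List (Entry k)), L.length = N → ChainInv h R C L →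
      ∃ p, Good h p := by
  intro N
  induction N with
  | zero =>
    intro R C L hL hI
    obtain rfl := List.length_eq_zero_iff.1 hL
    exact ⟨s, R, C, [], hI, hI.sound s hs, by simp⟩
  | succ N ih =>
    intro R C L hL hI
    have hne : L ≠ [] := by rintro rfl; simp at hL
    obtain ⟨⟨a, ha, hpa⟩, ⟨b, hb, hpb⟩⟩ := Precedes.chain_pivot hne hI.chain
    by_cases hC : ∃ c ∈ C, ∀ e ∈ L, c ∉ e.2.2
    · by_cases hR : ∃ r ∈ R, ∀ e ∈ L, r ∉ e.2.1
      · obtain ⟨c, hc, hc'⟩ := hC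
        obtain ⟨r, hr, hr'⟩ := hR
        exact ⟨(r, c), R, C, L, hI, ⟨hr, hc⟩, fun e he => ⟨hr' e he, hc' e he⟩⟩
      · -- All active rows are dominated, so the column of the pivot cannot contain the sink.
        push Not at hR
        obtain ⟨l₁, l₂, rfl⟩ := List.append_of_mem hb
        have hch := hI.chain
        simp only [List.pairwise_append, List.pairwise_cons, List.mem_cons, forall_eq_or_imp]
          at hch
        refine ih R (C.erase b.1.2) (l₁ ++ l₂) (by simp at hL ⊢; omega) ⟨?_, ?_, ?_, ?_, ?_⟩
        · intro e he
          exact hI.mem e (by simp at he ⊢; tauto)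
        · intro e he
          have hpe := hI.pos e (by simp at he ⊢; tauto)
          refine ⟨⟨hpe.1.1, Finset.mem_erase.2 ⟨?_, hpe.1.2⟩⟩, hpe.2⟩
          rcases List.mem_append.1 he with he | he
          · exact (hch.2.2 e he).1.1.2
          · exact (hch.2.1.1 e he).1.2.symm
        · rw [List.pairwise_append]
          exact ⟨hch.1, hch.2.1.2, fun x hx y hy => (hch.2.2 x hx).2 y hy⟩
        · have hbC := (hI.pos b hb).1.2
          have h1 := Finset.card_erase_of_mem hbC
          have h2 := Finset.card_pos.2 ⟨_, hbC⟩
          have h3 := hI.count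
          simp at h3 ⊢
          omega
        · intro s hs
          obtain ⟨h1, h2⟩ := hI.sound s hs
          refine ⟨h1, Finset.mem_erase.2 ⟨fun hsb => ?_, h2⟩⟩
          obtain ⟨e, he, hse, hbe⟩ := hpb s.1 (hR s.1 h1)
          exact hs e (hI.mem e he) ⟨hse, hbe (hsb ▸ (hI.pos b hb).2.2)⟩
    · -- All active columns are dominated, so the row of the pivot cannot contain the sink.
      push Not at hC
      obtain ⟨l₁, l₂, rfl⟩ := List.append_of_mem ha
      have hch := hI.chain
      simp only [List.pairwise_append, List.pairwise_cons, List.mem_cons, forall_eq_or_imp]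
        at hch
      refine ih (R.erase a.1.1) C (l₁ ++ l₂) (by simp at hL ⊢; omega) ⟨?_, ?_, ?_, ?_, ?_⟩
      · intro e he
        exact hI.mem e (by simp at he ⊢; tauto)
      · intro e he
        have hpe := hI.pos e (by simp at he ⊢; tauto)
        refine ⟨⟨Finset.mem_erase.2 ⟨?_, hpe.1.1⟩, hpe.1.2⟩, hpe.2⟩
        rcases List.mem_append.1 he with he | he
        · exact (hch.2.2 e he).1.1.1
        · exact (hch.2.1.1 e he).1.1.symm
      · rw [List.pairwise_append]
        exact ⟨hch.1, hch.2.1.2, fun x hx y hy => (hch.2.2 x hx).2 y hy⟩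
      · have haR := (hI.pos a ha).1.1
        have h1 := Finset.card_erase_of_mem haR
        have h2 := Finset.card_pos.2 ⟨_, haR⟩
        have h3 := hI.count
        simp at h3 ⊢
        omega
      · intro s hs
        obtain ⟨h1, h2⟩ := hI.sound s hs
        refine ⟨Finset.mem_erase.2 ⟨fun hsa => ?_, h1⟩, h2⟩
        obtain ⟨e, he, hse, hae⟩ := hpa s.2 (hC s.2 h2)
        exact hs e (hI.mem e he) ⟨hae (hsa ▸ (hI.pos a ha).2.1), hse⟩

/-- The chain occupies distinct rows and distinct columns, so an admissible block can only exist
while fewer than `2k - 1` evaluations have been made. -/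
lemma Good.length_lt {k : ℕ} {h : List (Entry k)} {p : Fin k × Fin k} (hp : Good h p) :
    h.length + 1 ≤ 2 * k - 1 := by
  obtain ⟨R, C, L, hI, ⟨hR, hC⟩, hout⟩ := hp
  have hsub : insert p.1 (L.map (fun e => e.1.1)).toFinset ⊆ R := by
    intro x hx
    simp only [Finset.mem_insert, List.mem_toFinset, List.mem_map] at hx
    rcases hx with rfl | ⟨e, he, rfl⟩
    · exact hR
    · exact (hI.pos e he).1.1
  have hnot : p.1 ∉ (L.map (fun e => e.1.1)).toFinset := by
    simp only [List.mem_toFinset, List.mem_map, not_exists, not_and]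
    intro e he heq
    exact (hout e he).1 (heq ▸ (hI.pos e he).2.1)
  have hnd : (L.map (fun e => e.1.1)).Nodup :=
    List.pairwise_map.2 (hI.chain.imp fun h => h.1.1)
  have h1 := Finset.card_le_card hsub
  rw [Finset.card_insert_of_notMem hnot, List.toFinset_card_of_nodup hnd, List.length_map] at h1
  have h2 : C.card ≤ k := by simpa using Finset.card_le_univ C
  have h3 : 0 < C.card := Finset.card_pos.2 ⟨_, hC⟩
  have h4 := hI.count
  omega

lemma Good.extend {k : ℕ} {h : List (Entry k)} {p : Fin k × Fin k} (hp : Good h p)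
    {I J : Finset (Fin k)} (hI : p.1 ∈ I) (hJ : p.2 ∈ J)
    (hsub : ∀ e ∈ h, p.1 ∉ e.2.1 → p.2 ∉ e.2.2 → e.2.1 ⊆ I ∨ e.2.2 ⊆ J) :
    ∃ R C L, ChainInv (h ++ [(p, I, J)]) R C L := by
  obtain ⟨R, C, L, hInv, hpRC, hout⟩ := hp
  refine ⟨R, C, L ++ [(p, I, J)], ?_, ?_, ?_, ?_, ?_⟩
  · intro e he
    rcases List.mem_append.1 he with he | he
    · exact List.mem_append_left _ (hInv.mem e he)
    · exact List.mem_append_right _ he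
  · intro e he
    rcases List.mem_append.1 he with he | he
    · exact hInv.pos e he
    · obtain rfl := List.mem_singleton.1 he
      exact ⟨hpRC, hI, hJ⟩
  · rw [List.pairwise_append]
    refine ⟨hInv.chain, by simp, ?_⟩
    intro a ha b hb
    obtain rfl := List.mem_singleton.1 hb
    obtain ⟨h1, h2⟩ := hout a ha
    have h3 := (hInv.pos a ha).2
    exact ⟨⟨fun h => h1 (h ▸ h3.1), fun h => h2 (h ▸ h3.2)⟩, hsub a (hInv.mem a ha) h1 h2⟩
  · have := hInv.count
    simp
    omega
  · intro s hs
    exact hInv.sound s fun e he => hs e (List.mem_append_left _ he)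

/-! ### Sinks of subgrids -/

/-- A vertex whose row and column are both free of outgoing edges is a sink: edges only run inside
lines. -/
lemma isSinkIn_of_lines {m n : ℕ} (o : GridOrientation m n) {I : Set (Fin m)} {J : Set (Fin n)}
    {v : Fin m × Fin n} (h1 : v.1 ∈ I) (h2 : v.2 ∈ J)
    (hI : ∀ i ∈ I, o.dir v (i, v.2) = false) (hJ : ∀ j ∈ J, o.dir v (v.1, j) = false) :
    IsSinkIn o I J v := by
  refine ⟨h1, h2, fun u hu1 hu2 => ?_⟩
  by_contra hd
  have hd' : o.dir v u = true := by simpa using hd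
  obtain ⟨-, h | h⟩ := o.dir_adj v u hd'
  · exact hd (by rw [show u = (v.1, u.2) from Prod.ext h.symm rfl]; exact hJ _ hu2)
  · exact hd (by rw [show u = (u.1, v.2) from Prod.ext rfl h.symm]; exact hI _ hu1)

lemma IsSinkIn.mono {m n : ℕ} {o : GridOrientation m n} {I I' : Set (Fin m)} {J J' : Set (Fin n)}
    {v : Fin m × Fin n} (h : IsSinkIn o I J v) (hI : I' ⊆ I) (hJ : J' ⊆ J)
    (h1 : v.1 ∈ I') (h2 : v.2 ∈ J') : IsSinkIn o I' J' v :=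
  ⟨h1, h2, fun u hu1 hu2 => h.2.2 u (hI hu1) (hJ hu2)⟩

lemma IsSinkIn.unique {m n : ℕ} {o : GridOrientation m n} (hU : IsUSO o) {I : Set (Fin m)}
    {J : Set (Fin n)} {v w : Fin m × Fin n} (hv : IsSinkIn o I J v) (hw : IsSinkIn o I J w) :
    v = w :=
  (hU I J ⟨_, hv.1⟩ ⟨_, hv.2.1⟩).unique hv hw

/-- If the sink of `I × J` has an edge into the columns `J'`, and the sink of `I' × J'` has an edge
into the rows `I`, then the sink of `(I ∪ I') × (J ∪ J')` lies in `I × J'`. -/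
lemma exists_sink_corner {m n : ℕ} {o : GridOrientation m n} (hU : IsUSO o)
    {I I' : Set (Fin m)} {J J' : Set (Fin n)} {v w : Fin m × Fin n}
    (hv : IsSinkIn o I J v) (hw : IsSinkIn o I' J' w)
    (hvJ : ∃ j ∈ J', o.dir v (v.1, j) = true) (hwI : ∃ i ∈ I, o.dir w (i, w.2) = true) :
    ∃ t, t.1 ∈ I ∧ t.2 ∈ J' ∧ IsSinkIn o (I ∪ I') (J ∪ J') t := by
  obtain ⟨t, ht, -⟩ := hU I (J ∪ J') ⟨_, hv.1⟩ ⟨_, Or.inl hv.2.1⟩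
  obtain ⟨t', ht', -⟩ := hU (I ∪ I') J' ⟨_, Or.inl hv.1⟩ ⟨_, hw.2.1⟩
  have htJ : t.2 ∈ J' := by
    refine ht.2.1.resolve_left fun h => ?_
    obtain rfl := hv.unique hU (ht.mono subset_rfl Set.subset_union_left ht.1 h)
    obtain ⟨j, hj, hd⟩ := hvJ
    have := ht.2.2 (v.1, j) ht.1 (Or.inr hj)
    simp [hd] at this
  have htI : t'.1 ∈ I := by
    refine ht'.1.resolve_right fun h => ?_
    obtain rfl := hw.unique hU (ht'.mono Set.subset_union_right subset_rfl h ht'.2.1)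
    obtain ⟨i, hi, hd⟩ := hwI
    have := ht'.2.2 (i, w.2) (Or.inl hi) ht'.2.1
    simp [hd] at this
  obtain rfl := (ht.mono subset_rfl Set.subset_union_right ht.1 htJ).unique hU
    (ht'.mono Set.subset_union_left subset_rfl htI ht'.2.1)
  exact ⟨t, ht.1, htJ, isSinkIn_of_lines o (Or.inl ht.1) (Or.inr htJ)
    (fun i hi => ht'.2.2 _ hi htJ) (fun j hj => ht.2.2 _ ht.1 hj)⟩

/-- The sinks of two subgrids with disjoint rows cannot each have edges into both the rows and the
columns of the other subgrid: the sink of the joint subgrid would lie in both off-diagonal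
corners. -/
lemma not_mutual_sources {m n : ℕ} {o : GridOrientation m n} (hU : IsUSO o)
    {I I' : Set (Fin m)} {J J' : Set (Fin n)} (hdis : Disjoint I I') {v w : Fin m × Fin n}
    (hv : IsSinkIn o I J v) (hw : IsSinkIn o I' J' w)
    (hvI : ∃ i ∈ I', o.dir v (i, v.2) = true) (hvJ : ∃ j ∈ J', o.dir v (v.1, j) = true)
    (hwI : ∃ i ∈ I, o.dir w (i, w.2) = true) (hwJ : ∃ j ∈ J, o.dir w (w.1, j) = true) :
    False := by
  obtain ⟨t, ht1, -, ht⟩ := exists_sink_corner hU hv hw hvJ hwI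
  obtain ⟨t', ht1', -, ht'⟩ := exists_sink_corner hU hw hv hwJ hvI
  rw [Set.union_comm I', Set.union_comm J'] at ht'
  obtain rfl := ht.unique hU ht'
  exact Set.disjoint_left.1 hdis ht1 ht1'

/-! ### Blocks -/

/-- The block of a line: the `k * N` lines are split into `k` consecutive groups of size `N`. -/
def blk {k N : ℕ} (i : Fin (k * N)) : Fin k := (finProdFinEquiv.symm i).1

/-- The inclusion of block `p` into the grid. -/
def emb {k N : ℕ} (p : Fin k × Fin k) (u : Fin N × Fin N) : Fin (k * N) × Fin (k * N) :=
  (finProdFinEquiv (p.1, u.1), finProdFinEquiv (p.2, u.2))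

lemma blk_mk {k N : ℕ} (a : Fin k) (x : Fin N) : blk (finProdFinEquiv (a, x)) = a := by
  simp [blk]

lemma exists_eq_mk {k N : ℕ} (i : Fin (k * N)) :
    ∃ x : Fin N, i = finProdFinEquiv (blk i, x) :=
  ⟨(finProdFinEquiv.symm i).2, (finProdFinEquiv.apply_symm_apply i).symm⟩

lemma emb_adj {k N : ℕ} (p : Fin k × Fin k) (u v : Fin N × Fin N) :
    GridAdj (emb p u) (emb p v) ↔ GridAdj u v := by
  simp [GridAdj, emb, Prod.ext_iff]

/-- The orientation induced on block `p`. -/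
def subOr {k N : ℕ} (o : GridOrientation (k * N) (k * N)) (p : Fin k × Fin k) :
    GridOrientation N N where
  dir u v := o.dir (emb p u) (emb p v)
  dir_adj u v h := (emb_adj p u v).1 (o.dir_adj _ _ h)
  dir_total u v h := o.dir_total _ _ ((emb_adj p u v).2 h)

lemma isSinkIn_subOr {k N : ℕ} (o : GridOrientation (k * N) (k * N)) (p : Fin k × Fin k)
    (I J : Set (Fin N)) (v : Fin N × Fin N) :
    IsSinkIn (subOr o p) I J v ↔ IsSinkIn o ((fun x => finProdFinEquiv (p.1, x)) '' I)
      ((fun x => finProdFinEquiv (p.2, x)) '' J) (emb p v) := by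
  constructor
  · rintro ⟨h1, h2, h3⟩
    refine ⟨⟨_, h1, rfl⟩, ⟨_, h2, rfl⟩, ?_⟩
    rintro ⟨_, _⟩ ⟨x, hx, rfl⟩ ⟨y, hy, rfl⟩
    exact h3 (x, y) hx hy
  · rintro ⟨⟨x, hx, hx'⟩, ⟨y, hy, hy'⟩, h3⟩
    have hx'' : x = v.1 := by simpa [emb] using hx'
    have hy'' : y = v.2 := by simpa [emb] using hy'
    exact ⟨hx'' ▸ hx, hy'' ▸ hy, fun u h1 h2 => h3 (emb p u) ⟨_, h1, rfl⟩ ⟨_, h2, rfl⟩⟩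

lemma isUSO_subOr {k N : ℕ} {o : GridOrientation (k * N) (k * N)} (hU : IsUSO o)
    (p : Fin k × Fin k) : IsUSO (subOr o p) := by
  intro I J hI hJ
  obtain ⟨w, hw, huniq⟩ := hU _ _ (hI.image fun x => finProdFinEquiv (p.1, x))
    (hJ.image fun x => finProdFinEquiv (p.2, x))
  obtain ⟨x, hx, hx'⟩ := hw.1
  obtain ⟨y, hy, hy'⟩ := hw.2.1
  have hwe : w = emb p (x, y) := Prod.ext hx'.symm hy'.symm
  refine ⟨(x, y), (isSinkIn_subOr o p I J _).2 (hwe ▸ hw), ?_⟩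
  intro u hu
  have h := huniq _ ((isSinkIn_subOr o p I J u).1 hu)
  rw [hwe] at h
  simpa [emb, Prod.ext_iff] using h

lemma isGlobalSink_subOr {k N : ℕ} {o : GridOrientation (k * N) (k * N)} {p : Fin k × Fin k}
    {v : Fin N × Fin N} (hv : IsGlobalSink (subOr o p) v) :
    IsSinkIn o {i | blk i = p.1} {j | blk j = p.2} (emb p v) := by
  have h := (isSinkIn_subOr o p _ _ v).1 hv
  refine h.mono ?_ ?_ (blk_mk _ _) (blk_mk _ _)
  · intro i hi
    obtain ⟨x, hx⟩ := exists_eq_mk i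
    exact ⟨x, trivial, by rw [hx, show blk i = p.1 from hi]⟩
  · intro i hi
    obtain ⟨x, hx⟩ := exists_eq_mk i
    exact ⟨x, trivial, by rw [hx, show blk i = p.2 from hi]⟩

/-- The block rows without outgoing edge from `v`, read off from the answers `f`. -/
def domRows {k N : ℕ} (f : (Fin (k * N) × Fin (k * N)) → Bool) (v : Fin (k * N) × Fin (k * N)) :
    Finset (Fin k) :=
  Finset.univ.filter fun a => ∀ i : Fin (k * N), blk i = a → f (i, v.2) = false

/-- The block columns without outgoing edge from `v`, read off from the answers `f`. -/
def domCols {k N : ℕ} (f : (Fin (k * N) × Fin (k * N)) → Bool) (v : Fin (k * N) × Fin (k * N)) :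
    Finset (Fin k) :=
  Finset.univ.filter fun a => ∀ j : Fin (k * N), blk j = a → f (v.1, j) = false

lemma mem_domRows {k N : ℕ} {f : (Fin (k * N) × Fin (k * N)) → Bool}
    {v : Fin (k * N) × Fin (k * N)} {a : Fin k} :
    a ∈ domRows f v ↔ ∀ i : Fin (k * N), blk i = a → f (i, v.2) = false := by
  simp [domRows]

lemma mem_domCols {k N : ℕ} {f : (Fin (k * N) × Fin (k * N)) → Bool}
    {v : Fin (k * N) × Fin (k * N)} {a : Fin k} :
    a ∈ domCols f v ↔ ∀ j : Fin (k * N), blk j = a → f (v.1, j) = false := by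
  simp [domCols]

section BlockSink

variable {k N : ℕ} {o : GridOrientation (k * N) (k * N)} {p q : Fin k × Fin k}
  {v w : Fin (k * N) × Fin (k * N)}

lemma mem_dom_self (hv : IsSinkIn o {i | blk i = p.1} {j | blk j = p.2} v) :
    p.1 ∈ domRows (o.dir v) v ∧ p.2 ∈ domCols (o.dir v) v :=
  ⟨mem_domRows.2 fun i hi => hv.2.2 (i, v.2) hi hv.2.1,
    mem_domCols.2 fun j hj => hv.2.2 (v.1, j) hv.1 hj⟩

/-- The sink of a block is the sink of the subgrid of all dominated blocks. -/
lemma isSinkIn_dom (hv : IsSinkIn o {i | blk i = p.1} {j | blk j = p.2} v) :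
    IsSinkIn o {i | blk i ∈ domRows (o.dir v) v} {j | blk j ∈ domCols (o.dir v) v} v := by
  have h := mem_dom_self hv
  refine isSinkIn_of_lines o ?_ ?_ (fun i hi => mem_domRows.1 hi i rfl)
    (fun j hj => mem_domCols.1 hj j rfl)
  · rw [Set.mem_ofPred_eq, show blk v.1 = p.1 from hv.1]
    exact h.1
  · rw [Set.mem_ofPred_eq, show blk v.2 = p.2 from hv.2.1]
    exact h.2

/-- The comparison of two evaluated blocks that drives the query game. -/
lemma dom_subset_or (hU : IsUSO o) (hv : IsSinkIn o {i | blk i = p.1} {j | blk j = p.2} v)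
    (hw : IsSinkIn o {i | blk i = q.1} {j | blk j = q.2} w)
    (h1 : q.1 ∉ domRows (o.dir v) v) (h2 : q.2 ∉ domCols (o.dir v) v) :
    domRows (o.dir v) v ⊆ domRows (o.dir w) w ∨ domCols (o.dir v) v ⊆ domCols (o.dir w) w := by
  by_contra hcon
  rw [not_or, Finset.not_subset, Finset.not_subset] at hcon
  obtain ⟨⟨a, ha, ha'⟩, b, hb, hb'⟩ := hcon
  simp only [mem_domRows, mem_domCols, not_forall, Bool.not_eq_false] at h1 h2 ha' hb'
  obtain ⟨i, hi, hi'⟩ := h1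
  obtain ⟨j, hj, hj'⟩ := h2
  obtain ⟨i₂, hi₂, hi₂'⟩ := ha'
  obtain ⟨j₂, hj₂, hj₂'⟩ := hb'
  refine not_mutual_sources hU (Set.disjoint_left.2 ?_) (isSinkIn_dom hv) hw ⟨i, hi, hi'⟩
    ⟨j, hj, hj'⟩ ⟨i₂, ?_, hi₂'⟩ ⟨j₂, ?_, hj₂'⟩
  · intro x hx hx'
    have := mem_domRows.1 hx i (hi.trans (show blk x = q.1 from hx').symm)
    simp [hi'] at this
  · rw [Set.mem_ofPred_eq, hi₂]; exact ha
  · rw [Set.mem_ofPred_eq, hj₂]; exact hb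

lemma eq_of_sink_mem_dom (hU : IsUSO o)
    (hv : IsSinkIn o {i | blk i = p.1} {j | blk j = p.2} v) (hs : IsGlobalSink o w)
    (h1 : blk w.1 ∈ domRows (o.dir v) v) (h2 : blk w.2 ∈ domCols (o.dir v) v) : v = w :=
  (isSinkIn_dom hv).unique hU (hs.mono (Set.subset_univ _) (Set.subset_univ _) h1 h2)

end BlockSink

/-! ### Query programs -/

/-- The type of ordered pairs of vertices that can be queried. -/
abbrev Query (n : ℕ) : Type := (Fin n × Fin n) × (Fin n × Fin n)

/-- Decision trees of edge queries with results in `α`; unlike `EdgeAlg` they compose. -/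
inductive Prog (n : ℕ) (α : Type) : Type
  | ret (a : α) : Prog n α
  | ask (e : Query n) (f : Bool → Prog n α) : Prog n α

namespace Prog

variable {n N : ℕ} {α β : Type}

/-- The result of a program on the orientation with answers `d`. -/
def run (d : Query n → Bool) : Prog n α → α
  | ret a => a
  | ask e f => run d (f (d e))

/-- The number of queries made by a program on the orientation with answers `d`. -/
def cost (d : Query n → Bool) : Prog n α → ℕ
  | ret _ => 0
  | ask e f => cost d (f (d e)) + 1

/-- Sequential composition. -/
def bind : Prog n α → (α → Prog n β) → Prog n β
  | ret a, g => g a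
  | ask e f, g => ask e fun b => bind (f b) g

/-- Renaming of queries. -/
def rename (φ : Query N → Query n) : Prog N α → Prog n α
  | ret a => ret a
  | ask e f => ask (φ e) fun b => rename φ (f b)

lemma run_bind (d : Query n → Bool) (P : Prog n α) (g : α → Prog n β) :
    (P.bind g).run d = (g (P.run d)).run d := by
  induction P with
  | ret a => rfl
  | ask e f ih => exact ih _

lemma cost_bind (d : Query n → Bool) (P : Prog n α) (g : α → Prog n β) :
    (P.bind g).cost d = P.cost d + (g (P.run d)).cost d := by
  induction P with
  | ret a => simp [bind, cost, run]
  | ask e f ih => simp only [bind, cost, run, ih]; omega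

lemma run_rename (d : Query n → Bool) (φ : Query N → Query n) (P : Prog N α) :
    (P.rename φ).run d = P.run fun e => d (φ e) := by
  induction P with
  | ret a => rfl
  | ask e f ih => exact ih _

lemma cost_rename (d : Query n → Bool) (φ : Query N → Query n) (P : Prog N α) :
    (P.rename φ).cost d = P.cost fun e => d (φ e) := by
  induction P with
  | ret a => rfl
  | ask e f ih => simp only [rename, cost, ih]

/-- Query all pairs of a list; the result records the answers, with `false` elsewhere. -/
def askAll : List (Query n) → Prog n (Query n → Bool)
  | [] => ret fun _ => false
  | e :: l => ask e fun b => (askAll l).bind fun g => ret (Function.update g e b)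

lemma cost_askAll (d : Query n → Bool) (l : List (Query n)) : (askAll l).cost d = l.length := by
  induction l with
  | nil => rfl
  | cons e l ih => simp [askAll, cost, cost_bind, ih]

lemma run_askAll (d : Query n → Bool) (l : List (Query n)) (e : Query n) :
    (askAll l).run d e = if e ∈ l then d e else false := by
  induction l with
  | nil => simp [askAll, run]
  | cons x l ih =>
    simp only [askAll, run, run_bind, List.mem_cons, Function.update_apply, ih]
    by_cases h : e = x
    · simp [h]
    · simp [h]

/-- The history-based algorithm that follows a program. Only the answers in the history matter. -/
def toAlg : Prog n (Fin n × Fin n) → EdgeAlg n n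
  | ret v, _ => Sum.inr v
  | ask e _, [] => Sum.inl e
  | ask _ f, x :: h => toAlg (f x.2) h

end Prog

/-- The answers given by an orientation. -/
def ans {n : ℕ} (o : GridOrientation n n) (e : Query n) : Bool := o.dir e.1 e.2

/-- The computation of `edgeRun` depends on the algorithm only through the continuation after the
first query. -/
lemma edgeRun_ask {n : ℕ} (o : GridOrientation n n) (e : Query n)
    (f : Bool → Prog n (Fin n × Fin n)) (t : ℕ) :
    edgeRun o (Prog.ask e f).toAlg (t + 1) =
      ((e, ans o e) :: (edgeRun o (f (ans o e)).toAlg t).1,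
        (edgeRun o (f (ans o e)).toAlg t).2) := by
  induction t with
  | zero => rfl
  | succ t ih =>
    rw [edgeRun, ih]
    rw [edgeRun]
    rcases edgeRun o (f (ans o e)).toAlg t with ⟨h, _ | v⟩
    · simp only [Prog.toAlg]
      rcases (f (ans o e)).toAlg h with e' | v' <;> rfl
    · rfl

lemma edgeRun_stable {n : ℕ} (o : GridOrientation n n) (A : EdgeAlg n n) {v : Fin n × Fin n}
    {t : ℕ} (h : (edgeRun o A t).2 = some v) (d : ℕ) : (edgeRun o A (t + d)).2 = some v := by
  induction d with
  | zero => exact h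
  | succ d ih =>
    rw [← Nat.add_assoc, edgeRun]
    rcases hE : edgeRun o A (t + d) with ⟨l, _ | w⟩
    · simp [hE] at ih
    · simpa [hE] using ih

lemma edgeRun_toAlg {n : ℕ} (o : GridOrientation n n) (P : Prog n (Fin n × Fin n)) :
    (edgeRun o P.toAlg (P.cost (ans o) + 1)).2 = some (P.run (ans o)) := by
  induction P with
  | ret a => rfl
  | ask e f ih =>
    rw [edgeRun_ask]
    exact ih _

lemma edgeRun_toAlg_of_le {n : ℕ} (o : GridOrientation n n) (P : Prog n (Fin n × Fin n)) {K : ℕ}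
    (hK : P.cost (ans o) ≤ K) : (edgeRun o P.toAlg (K + 1)).2 = some (P.run (ans o)) := by
  have h := edgeRun_stable o _ (edgeRun_toAlg o P) (K - P.cost (ans o))
  rwa [show P.cost (ans o) + 1 + (K - P.cost (ans o)) = K + 1 by omega] at h

/-- The program that follows an algorithm from the history `h` on for at most `t` queries, with
the junk result `v₀` if the algorithm wants to query further. -/
def ofAlg {n : ℕ} (A : EdgeAlg n n) (v₀ : Fin n × Fin n) :
    ℕ → List (Query n × Bool) → Prog n (Fin n × Fin n)
  | 0, h => match A h with
    | Sum.inl _ => .ret v₀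
    | Sum.inr v => .ret v
  | t + 1, h => match A h with
    | Sum.inl e => .ask e fun b => ofAlg A v₀ t (h ++ [(e, b)])
    | Sum.inr v => .ret v

lemma cost_ofAlg {n : ℕ} (A : EdgeAlg n n) (v₀ : Fin n × Fin n) (d : Query n → Bool) (t : ℕ)
    (h : List (Query n × Bool)) : (ofAlg A v₀ t h).cost d ≤ t := by
  induction t generalizing h with
  | zero =>
    rw [ofAlg]
    rcases A h with e | v <;> simp [Prog.cost]
  | succ t ih =>
    rw [ofAlg]
    rcases A h with e | v
    · simpa [Prog.cost] using ih _
    · simp [Prog.cost]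

lemma run_ofAlg {n : ℕ} (o : GridOrientation n n) (A : EdgeAlg n n) (v₀ v : Fin n × Fin n)
    (t r : ℕ) (h : List (Query n × Bool)) (hr : edgeRun o A r = (h, none))
    (hv : (edgeRun o A (r + t + 1)).2 = some v) : (ofAlg A v₀ t h).run (ans o) = v := by
  induction t generalizing r h with
  | zero =>
    rw [ofAlg]
    rw [Nat.add_zero, edgeRun, hr] at hv
    rcases hA : A h with e | w
    · simp [hA] at hv
    · simpa [hA, Prog.run] using hv
  | succ t ih =>
    rw [ofAlg]
    rcases hA : A h with e | w
    · have hstep : edgeRun o A (r + 1) = (h ++ [(e, ans o e)], none) := by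
        simp [edgeRun, hr, hA, ans]
      refine ih (r + 1) _ hstep ?_
      rwa [show r + 1 + t + 1 = r + (t + 1) + 1 by omega]
    · have hstep : (edgeRun o A (r + 1)).2 = some w := by simp [edgeRun, hr, hA]
      have h1 := edgeRun_stable o A hstep (t + 1)
      rw [show r + 1 + (t + 1) = r + (t + 1) + 1 by omega, hv] at h1
      exact (Option.some.inj h1).symm

/-! ### The divide-and-conquer algorithm -/

/-- The pairs `(v, u)` with `u` another vertex of the row or the column of `v`. -/
noncomputable def starAt {n : ℕ} (v : Fin n × Fin n) : List (Query n) :=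
  ((Finset.univ.erase v.1).toList.map fun i => (v, (i, v.2))) ++
    ((Finset.univ.erase v.2).toList.map fun j => (v, (v.1, j)))

lemma length_starAt {n : ℕ} (v : Fin n × Fin n) : (starAt v).length = 2 * n - 2 := by
  simp [starAt]
  omega

lemma mem_starAt {n : ℕ} {v u : Fin n × Fin n} (h : GridAdj v u) : (v, u) ∈ starAt v := by
  obtain ⟨v1, v2⟩ := v
  obtain ⟨u1, u2⟩ := u
  obtain ⟨hne, h | h⟩ := h
  · simp only at h
    subst h
    have : u2 ≠ v2 := fun h => hne (by rw [h])
    simp [starAt, this]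
  · simp only at h
    subst h
    have : u1 ≠ v1 := fun h => hne (by rw [h])
    simp [starAt, this]

/-- Pairs outside the star of `v` are no edges at `v`, so the answers on the star
determine all of `o.dir v`. -/
lemma run_askAll_starAt {n : ℕ} (o : GridOrientation n n) (v : Fin n × Fin n) :
    (fun u => (Prog.askAll (starAt v)).run (ans o) (v, u)) = o.dir v := by
  funext u
  rw [Prog.run_askAll]
  split_ifs with h
  · rfl
  · by_contra hd
    exact h (mem_starAt (o.dir_adj v u (by simpa using Ne.symm hd)))

section DivideAndConquer

variable {k N : ℕ}

/-- Find the sink of block `p` by the given algorithm. -/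
def solveBlock (A₀ : EdgeAlg N N) (v₀ : Fin N × Fin N) (T : ℕ) (p : Fin k × Fin k) :
    Prog (k * N) (Fin (k * N) × Fin (k * N)) :=
  ((ofAlg A₀ v₀ T []).rename fun e => (emb p e.1, emb p e.2)).bind fun v => .ret (emb p v)

/-- Find the sink of block `p` and query all edges at it. -/
noncomputable def evalBlock (A₀ : EdgeAlg N N) (v₀ : Fin N × Fin N) (T : ℕ) (p : Fin k × Fin k) :
    Prog (k * N) ((Fin (k * N) × Fin (k * N)) × Finset (Fin k) × Finset (Fin k)) :=
  (solveBlock A₀ v₀ T p).bind fun v => (Prog.askAll (starAt v)).bind fun g =>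
    .ret (v, domRows (fun u => g (v, u)) v, domCols (fun u => g (v, u)) v)

open Classical in
/-- An admissible block to evaluate after `h`, if there is one, and `p₀` otherwise. -/
noncomputable def next (p₀ : Fin k × Fin k) (h : List (Entry k)) : Fin k × Fin k :=
  if hp : ∃ p, Good h p then hp.choose else p₀

/-- Evaluate up to `t` further blocks after `h`, stopping at the global sink; the result is the
junk value `x₀` if it is not met. -/
noncomputable def loop (A₀ : EdgeAlg N N) (v₀ : Fin N × Fin N) (T : ℕ) (p₀ : Fin k × Fin k)
    (x₀ : Fin (k * N) × Fin (k * N)) :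
    ℕ → List (Entry k) → Prog (k * N) (Fin (k * N) × Fin (k * N))
  | 0, _ => .ret x₀
  | t + 1, h => (evalBlock A₀ v₀ T (next p₀ h)).bind fun r =>
      if r.2.1 = Finset.univ ∧ r.2.2 = Finset.univ then .ret r.1
      else loop A₀ v₀ T p₀ x₀ t (h ++ [(next p₀ h, r.2)])

lemma cost_evalBlock (A₀ : EdgeAlg N N) (v₀ : Fin N × Fin N) (T : ℕ) (p : Fin k × Fin k)
    (d : Query (k * N) → Bool) :
    (evalBlock A₀ v₀ T p).cost d ≤ T + (2 * (k * N) - 2) := by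
  have h := cost_ofAlg A₀ v₀ (fun e => d (emb p e.1, emb p e.2)) T []
  simp only [evalBlock, solveBlock, Prog.cost_bind, Prog.cost_rename, Prog.cost_askAll,
    length_starAt, Prog.cost]
  omega

lemma cost_loop (A₀ : EdgeAlg N N) (v₀ : Fin N × Fin N) (T : ℕ) (p₀ : Fin k × Fin k)
    (x₀ : Fin (k * N) × Fin (k * N)) (d : Query (k * N) → Bool) (t : ℕ) (h : List (Entry k)) :
    (loop A₀ v₀ T p₀ x₀ t h).cost d ≤ t * (T + (2 * (k * N) - 2)) := by
  induction t generalizing h with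
  | zero => simp [loop, Prog.cost]
  | succ t ih =>
    rw [loop, Prog.cost_bind, Nat.succ_mul, Nat.add_comm]
    refine Nat.add_le_add ?_ (cost_evalBlock A₀ v₀ T _ d)
    split_ifs
    · simp [Prog.cost]
    · exact ih _

lemma solveBlock_spec {A₀ : EdgeAlg N N} {v₀ : Fin N × Fin N} {T : ℕ}
    (hA : ∀ o : GridOrientation N N, IsUSO o → EdgeFindsSinkWithin o A₀ T)
    {o : GridOrientation (k * N) (k * N)} (hU : IsUSO o) (p : Fin k × Fin k) :
    IsSinkIn o {i | blk i = p.1} {j | blk j = p.2} ((solveBlock A₀ v₀ T p).run (ans o)) := by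
  have hU' := isUSO_subOr hU p
  obtain ⟨v, hv, -⟩ := hU' Set.univ Set.univ ⟨v₀.1, trivial⟩ ⟨v₀.2, trivial⟩
  have hrun := run_ofAlg (subOr o p) A₀ v₀ v T 0 [] rfl (by
    rw [Nat.zero_add]
    exact hA _ hU' v hv)
  have : (solveBlock A₀ v₀ T p).run (ans o) = emb p v := by
    rw [solveBlock, Prog.run_bind, Prog.run_rename, Prog.run, ← hrun]
    rfl
  rw [this]
  exact isGlobalSink_subOr hv

lemma run_evalBlock (A₀ : EdgeAlg N N) (v₀ : Fin N × Fin N) (T : ℕ)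
    (o : GridOrientation (k * N) (k * N)) (p : Fin k × Fin k) :
    (evalBlock A₀ v₀ T p).run (ans o) =
      ((solveBlock A₀ v₀ T p).run (ans o),
        domRows (o.dir ((solveBlock A₀ v₀ T p).run (ans o))) ((solveBlock A₀ v₀ T p).run (ans o)),
        domCols (o.dir ((solveBlock A₀ v₀ T p).run (ans o)))
          ((solveBlock A₀ v₀ T p).run (ans o))) := by
  rw [evalBlock, Prog.run_bind, Prog.run_bind, run_askAll_starAt, Prog.run]

/-- From a history of correct answers that satisfies the invariant and has not met the global sink,
the algorithm finds it with the remaining evaluations out of `2k - 1`. -/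
lemma run_loop {A₀ : EdgeAlg N N} {v₀ : Fin N × Fin N} {T : ℕ}
    (hA : ∀ o : GridOrientation N N, IsUSO o → EdgeFindsSinkWithin o A₀ T)
    {o : GridOrientation (k * N) (k * N)} (hU : IsUSO o) {s : Fin (k * N) × Fin (k * N)}
    (hs : IsGlobalSink o s) (p₀ : Fin k × Fin k) (x₀ : Fin (k * N) × Fin (k * N)) (t : ℕ)
    (h : List (Entry k)) (hlen : h.length + t = 2 * k - 1) (hinv : ∃ R C L, ChainInv h R C L)
    (htrue : ∀ e ∈ h, e.2 = ((evalBlock A₀ v₀ T e.1).run (ans o)).2)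
    (hun : ∀ e ∈ h, ¬ (blk s.1 ∈ e.2.1 ∧ blk s.2 ∈ e.2.2)) :
    (loop A₀ v₀ T p₀ x₀ t h).run (ans o) = s := by
  have hgood : ∃ p, Good h p := by
    obtain ⟨R, C, L, hI⟩ := hinv
    exact exists_good (s := (blk s.1, blk s.2)) hun _ R C L rfl hI
  induction t generalizing h with
  | zero =>
    have := hgood.choose_spec.length_lt
    omega
  | succ t ih =>
    have hnext : Good h (next p₀ h) := by
      rw [next, dif_pos hgood]
      exact hgood.choose_spec
    set p := next p₀ h with hp
    have hsol := solveBlock_spec (v₀ := v₀) hA hU p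
    have hev := run_evalBlock A₀ v₀ T o p
    rw [loop, Prog.run_bind, ← hp, hev]
    set v := (solveBlock A₀ v₀ T p).run (ans o) with hv
    dsimp only
    split_ifs with hfull
    · exact eq_of_sink_mem_dom hU hsol hs (Finset.eq_univ_iff_forall.1 hfull.1 _)
        (Finset.eq_univ_iff_forall.1 hfull.2 _)
    · have hself := mem_dom_self hsol
      have hinv' := hnext.extend hself.1 hself.2 (by
        intro e he h1 h2
        have ht := htrue e he
        rw [run_evalBlock] at ht
        rw [ht] at h1 h2 ⊢
        exact dom_subset_or hU (solveBlock_spec hA hU e.1) hsol h1 h2)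
      have hun' : ∀ e ∈ h ++ [(p, domRows (o.dir v) v, domCols (o.dir v) v)],
          ¬ (blk s.1 ∈ e.2.1 ∧ blk s.2 ∈ e.2.2) := by
        intro e he
        rcases List.mem_append.1 he with he | he
        · exact hun e he
        · obtain rfl := List.mem_singleton.1 he
          rintro ⟨h1, h2⟩
          have hvs := eq_of_sink_mem_dom hU hsol hs h1 h2
          refine hfull ⟨?_, ?_⟩
          · refine Finset.eq_univ_iff_forall.2 fun a => mem_domRows.2 fun i _ => ?_
            rw [hvs]
            exact hs.2.2 _ trivial trivial
          · refine Finset.eq_univ_iff_forall.2 fun a => mem_domCols.2 fun i _ => ?_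
            rw [hvs]
            exact hs.2.2 _ trivial trivial
      refine ih _ (by simp; omega) hinv' ?_ hun' ?_
      · intro e he
        rcases List.mem_append.1 he with he | he
        · exact htrue e he
        · obtain rfl := List.mem_singleton.1 he
          exact (congrArg Prod.snd hev).symm
      · obtain ⟨R, C, L, hI⟩ := hinv'
        exact exists_good (s := (blk s.1, blk s.2)) hun' _ R C L rfl hI

end DivideAndConquer

/-- divide-and-conquer recurrence: if `k ∣ n` and some deterministic
edge-query algorithm finds the sink of every `(n/k, n/k)`-grid USO within `T` edge
queries, then some deterministic edge-query algorithm finds the sink of every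
`(n,n)`-grid USO within `(2k - 1) * (T + 2n - 2)` edge queries. -/
theorem divide_and_conquer_recurrence (n k : ℕ) (hk : 0 < k) (hdvd : k ∣ n) (T : ℕ)
    (hT : ∃ A₀ : EdgeAlg (n / k) (n / k), ∀ o : GridOrientation (n / k) (n / k),
      IsUSO o → EdgeFindsSinkWithin o A₀ T) :
    ∃ A : EdgeAlg n n, ∀ o : GridOrientation n n, IsUSO o →
      EdgeFindsSinkWithin o A ((2 * k - 1) * (T + (2 * n - 2))) := by
  obtain ⟨N, rfl⟩ := hdvd
  rw [Nat.mul_div_cancel_left N hk] at hT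
  obtain ⟨A₀, hA⟩ := hT
  -- The first move of `A₀` already names a vertex, so the grid is nonempty.
  have v₀ : Fin N × Fin N := Sum.elim Prod.fst id (A₀ [])
  have p₀ : Fin k × Fin k := (⟨0, hk⟩, ⟨0, hk⟩)
  refine ⟨(loop A₀ v₀ T p₀ (emb p₀ v₀) (2 * k - 1) []).toAlg, fun o hU s hs => ?_⟩
  rw [edgeRun_toAlg_of_le o _ (cost_loop A₀ v₀ T p₀ _ (ans o) _ [])]
  rw [run_loop hA hU hs p₀ _ (2 * k - 1) [] (by simp) ?_ (by simp) (by simp)]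
  refine ⟨Finset.univ, Finset.univ, [], by simp, by simp, by simp, ?_, by simp⟩
  simp
  omega
end
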